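/- Let ν be the unique probability measure on LO_0 invariant for the process seen from the front (i.e. Q_t ν = ν for all t ≥ 0, where Q_t π is the pushforward under θ of ∫ P_t(ω,·) dπ(ω)). Then ν is absolutely continuous with respect to μ̃: every measurable set A with μ̃(A) = 0 satisfies ν(A) = 0. -/

import Mathlib

open MeasureTheory ProbabilityTheory Filter Topology

noncomputable section

/-- The configuration space of the East model on `ℤ`: `0` ↔ `false` (empty), `1` ↔ `true`. -/
abbrev Config : Type := ℤ → Bool

/-- The configuration `ω` flipped at site `x`. -/
def flipAt (ω : Config) (x : ℤ) : Config := fun y => if y = x then !ω x else ω y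

/-- `f` depends only on the coordinates in `S`. -/
def DependsOnF (f : Config → ℝ) (S : Set ℤ) : Prop :=
  ∀ ω ω' : Config, (∀ x ∈ S, ω x = ω' x) → f ω = f ω'

/-- The set `A` depends only on the coordinates in `S`. -/
def DependsOnSet (A : Set Config) (S : Set ℤ) : Prop :=
  ∀ ω ω' : Config, (∀ x ∈ S, ω x = ω' x) → (ω ∈ A ↔ ω' ∈ A)

/-- A cylinder (local) function: depends on finitely many coordinates. -/
def IsCylinder (f : Config → ℝ) : Prop := ∃ S : Finset ℤ, DependsOnF f ↑S

/-- The East generator at density `p` of ones. -/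
def eastGen (p : ℝ) (f : Config → ℝ) (ω : Config) : ℝ :=
  ∑' x : ℤ, (if ω (x + 1) = false then (1 : ℝ) else 0) *
    (if ω x = false then p else 1 - p) * (f (flipAt ω x) - f ω)

/-- Spatial translation: `(shift y ω) x = ω (x + y)`. -/
def shift (y : ℤ) (ω : Config) : Config := fun x => ω (x + y)

/-- Left-occupied configurations: identically `1` on a left half-line, with an empty site. -/
def LO : Set Config := {ω | (∃ y : ℤ, ∀ x < y, ω x = true) ∧ ∃ x, ω x = false}

/-- The front: position of the left-most zero. -/
def front (ω : Config) : ℤ := sInf {x : ℤ | ω x = false}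

/-- Left-occupied configurations with front at the origin. -/
def LO₀ : Set Config := {ω ∈ LO | front ω = 0}

/-- The configuration seen at distance `L` behind the front. -/
def θL (L : ℤ) (ω : Config) : Config := fun x =>
  if x < 0 then true else if x = 0 then false else ω (front ω + L + x)

/-- `f` averaged over the coordinate at site `1` w.r.t. Bernoulli(p). -/
def avg1 (p : ℝ) (f : Config → ℝ) (ω : Config) : ℝ :=
  p * f (Function.update ω 1 true) + (1 - p) * f (Function.update ω 1 false)

/-- The East process on `ℤ` at density `p`, together with its equilibrium measure. -/
structure EastProcess where
  /-- equilibrium density of ones -/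
  p : ℝ
  hp0 : 0 < p
  hp1 : p < 1
  /-- the Markov semigroup -/
  P : ℝ → Kernel Config Config
  markov : ∀ t : ℝ, IsMarkovKernel (P t)
  P0 : P 0 = Kernel.id
  semigroup : ∀ s t : ℝ, 0 ≤ s → 0 ≤ t → P (t + s) = (P s).comp (P t)
  feller : ∀ t : ℝ, 0 ≤ t → ∀ f : Config → ℝ, Continuous f →
    Continuous fun ω : Config => ∫ η, f η ∂(P t ω)
  timeCont : ∀ f : Config → ℝ, Continuous f → ∀ ω : Config,
    Continuous fun t : ℝ => ∫ η, f η ∂(P t ω)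
  shiftComm : ∀ t : ℝ, 0 ≤ t → ∀ y : ℤ, ∀ ω : Config,
    P t (shift y ω) = Measure.map (shift y) (P t ω)
  generator : ∀ f : Config → ℝ, IsCylinder f → ∀ ω : Config,
    HasDerivWithinAt (fun u : ℝ => ∫ η, f η ∂(P u ω)) (eastGen p f ω) (Set.Ici 0) 0
  /-- the product Bernoulli(p) measure -/
  μ : Measure Config
  μprob : IsProbabilityMeasure μ
  μprod : ∀ (S : Finset ℤ) (σ : ℤ → Bool),
    μ {ω : Config | ∀ x ∈ S, ω x = σ x} = ∏ x ∈ S, ENNReal.ofReal (if σ x then p else 1 - p)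
  /-- LO is stable for the dynamics -/
  loStable : ∀ t : ℝ, 0 ≤ t → ∀ ω ∈ LO, P t ω LO = 1

/-- The set of Rayleigh quotients defining the spectral gap. -/
def gapSet (E : EastProcess) : Set ℝ :=
  {r | ∃ f : Config → ℝ, IsCylinder f ∧ 0 < variance f E.μ ∧
    r = (-∫ ω, f ω * eastGen E.p f ω ∂E.μ) / variance f E.μ}

/-- The spectral gap of the East process. -/
def gap (E : EastProcess) : ℝ := sInf (gapSet E)

/-- The product measure `μ̃`: all ones on the negative half-line, a zero at the origin,
Bernoulli(p) on the positive half-line. -/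
def IsMuTilde (p : ℝ) (μt : Measure Config) : Prop :=
  IsProbabilityMeasure μt ∧
  ∀ (S : Finset ℤ) (σ : ℤ → Bool),
    μt {ω : Config | ∀ x ∈ S, ω x = σ x} =
      ∏ x ∈ S, ENNReal.ofReal
        (if x < 0 then (if σ x then 1 else 0)
         else if x = 0 then (if σ x then 0 else 1)
         else (if σ x then p else 1 - p))

/-- The law at time `t` of the process seen from the front started from `π`. -/
def Qt (E : EastProcess) (t : ℝ) (π : Measure Config) : Measure Config :=
  Measure.map (θL 0) (π.bind fun ω => E.P t ω)

/-!
Stationarity of `ν` seen from the front is tested against the logarithm of its regularised density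
`F` on `[1, n]` with respect to the Bernoulli measure. The bulk flips contribute at most minus a
Dirichlet form of `√F`, while the two front moves and the flip of the last site contribute `O(1)`.
Hence the Dirichlet energies of `√F` are summable along the sites, uniformly in `n`, and the energy
beyond a far site `L` is as small as we please.

A zero at `m` releases the constraint at the right end of the window `[L, m - 1]`, so the spectral
gap bounds the distance of `√F` to its average over that window by this small energy. The average is
decoupled from the sites of `[L, m - 1]`, and resampling the finitely many sites of `[1, L - 1]` as
well costs only a constant. This gives `ν(b) ≤ ε + C μ(b)` for local events `b`, with `C` depending
on `ε` only.

The zero `m` can be found arbitrarily far to the right `ν`-almost surely: otherwise `ν`-mass would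
sit on configurations with a right-most zero, and seen from it they would have a stationary law,
which the gap forces to be Bernoulli on the left. This is incompatible with a half-line of ones.
-/

/-! ### Cylinder functions -/

attribute [fun_prop] IsCylinder

namespace DependsOnF

variable {f : Config → ℝ} {S T : Set ℤ}

lemma mono (h : DependsOnF f S) (hST : S ⊆ T) : DependsOnF f T :=
  fun ω ω' hω => h ω ω' fun x hx => hω x (hST hx)

lemma flipAt_eq (h : DependsOnF f S) {x : ℤ} (hx : x ∉ S) (ω : Config) : f (flipAt ω x) = f ω :=
  h _ _ fun _ hy => if_neg (ne_of_mem_of_not_mem hy hx)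

lemma piecewise_eq (h : DependsOnF f S) {W : Finset ℤ} (hSW : Disjoint S ↑W) (ζ ω : Config) :
    f (W.piecewise ζ ω) = f ω :=
  h _ _ fun _ hx => W.piecewise_eq_of_notMem _ _ (hSW.notMem_of_mem_left hx)

lemma exists_comp_restrict {W : Finset ℤ} (h : DependsOnF f ↑W) :
    ∃ g : (W → Bool) → ℝ, f = g ∘ W.restrict :=
  dependsOn_iff_exists_comp.1 fun ω ω' => h ω ω'

end DependsOnF

namespace IsCylinder

variable {f g : Config → ℝ}

@[fun_prop]
theorem continuous (hf : IsCylinder f) : Continuous f := by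
  obtain ⟨W, hW⟩ := hf
  obtain ⟨g, rfl⟩ := hW.exists_comp_restrict
  exact continuous_of_discreteTopology.comp W.continuous_restrict

lemma comp₂ (φ : ℝ → ℝ → ℝ) (hf : IsCylinder f) (hg : IsCylinder g) :
    IsCylinder fun ω => φ (f ω) (g ω) := by
  obtain ⟨S, hS⟩ := hf
  obtain ⟨T, hT⟩ := hg
  exact ⟨S ∪ T, fun ω ω' h => congrArg₂ φ (hS ω ω' fun x hx => h x (by simpa using .inl hx))
    (hT ω ω' fun x hx => h x (by simpa using .inr hx))⟩

@[fun_prop]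
lemma const (c : ℝ) : IsCylinder fun _ => c := ⟨∅, fun _ _ _ => rfl⟩

@[fun_prop]
lemma add (hf : IsCylinder f) (hg : IsCylinder g) : IsCylinder fun ω => f ω + g ω :=
  comp₂ (· + ·) hf hg

@[fun_prop]
lemma sub (hf : IsCylinder f) (hg : IsCylinder g) : IsCylinder fun ω => f ω - g ω :=
  comp₂ (· - ·) hf hg

@[fun_prop]
lemma mul (hf : IsCylinder f) (hg : IsCylinder g) : IsCylinder fun ω => f ω * g ω :=
  comp₂ (· * ·) hf hg

lemma finset_sum {ι : Type*} (s : Finset ι) {f : ι → Config → ℝ} (hf : ∀ i, IsCylinder (f i)) :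
    IsCylinder fun ω => ∑ i ∈ s, f i ω := by
  classical
  induction s using Finset.induction_on with
  | empty => simpa using const 0
  | insert a s ha ih => simpa only [Finset.sum_insert ha] using (hf a).add ih

lemma comp_config (hf : IsCylinder f) {T : Config → Config}
    (hT : ∀ x : ℤ, ∃ S : Finset ℤ, ∀ ω ω' : Config, (∀ y ∈ S, ω y = ω' y) → T ω x = T ω' x) :
    IsCylinder fun ω => f (T ω) := by
  obtain ⟨S, hS⟩ := hf
  choose U hU using hT
  refine ⟨S.biUnion U, fun ω ω' h => hS _ _ fun x hx => hU x _ _ fun y hy => h y ?_⟩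
  exact Finset.mem_coe.2 (Finset.mem_biUnion.2 ⟨x, hx, hy⟩)

lemma comp_flipAt (hf : IsCylinder f) (x : ℤ) : IsCylinder fun ω => f (flipAt ω x) :=
  hf.comp_config fun y => ⟨{x, y}, fun ω ω' h => by simp [flipAt, h x, h y]⟩

end IsCylinder

namespace East

section CompactSpace

variable {X : Type*} [TopologicalSpace X] [CompactSpace X] {f : X → ℝ}

lemma exists_abs_le_of_continuous (hf : Continuous f) : ∃ b, ∀ x, |f x| ≤ b := by
  simpa using isCompact_univ.exists_bound_of_continuousOn hf.continuousOn

lemma integrable_of_continuous [MeasurableSpace X] [OpensMeasurableSpace X] (hf : Continuous f)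
    (m : Measure X) [IsFiniteMeasure m] : Integrable f m :=
  hf.integrable_of_hasCompactSupport (.of_compactSpace f)

end CompactSpace

lemma integral_comp_eq_sum {Ω S : Type*} [MeasurableSpace Ω] [Fintype S] [MeasurableSpace S]
    [MeasurableSingletonClass S] {X : Ω → S} (hX : Measurable X) (g : S → ℝ)
    (m : Measure Ω) [IsFiniteMeasure m] :
    ∫ ω, g (X ω) ∂m = ∑ s, m.real (X ⁻¹' {s}) * g s := by
  rw [← integral_map hX.aemeasurable (measurable_of_finite g).aestronglyMeasurable,
    integral_fintype .of_finite]
  simp [map_measureReal_apply hX (measurableSet_singleton _)]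

@[fun_prop]
lemma continuous_flipAt (x : ℤ) : Continuous fun ω => flipAt ω x :=
  continuous_pi fun y => by
    by_cases h : y = x <;> simp only [flipAt, h, if_true, if_false] <;> fun_prop

@[fun_prop]
lemma continuous_shift (y : ℤ) : Continuous (shift y) := by
  unfold shift; fun_prop

@[fun_prop]
lemma continuous_piecewise {Y : Type*} [TopologicalSpace Y] (W : Finset ℤ) {ζ ω : Y → Config}
    (hζ : Continuous ζ) (hω : Continuous ω) : Continuous fun y => W.piecewise (ζ y) (ω y) :=
  continuous_pi fun x => by
    by_cases h : x ∈ W <;> simp only [Finset.piecewise, h, if_true, if_false] <;> fun_prop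

lemma flipAt_flipAt (ω : Config) (x : ℤ) : flipAt (flipAt ω x) x = ω := by
  funext y; by_cases h : y = x <;> simp [flipAt, h]

lemma flipAt_update (ω : Config) (x : ℤ) (b : Bool) :
    flipAt (Function.update ω x b) x = Function.update ω x (!b) := by
  funext y; by_cases h : y = x <;> simp [flipAt, h]

lemma piecewise_flipAt {W : Finset ℤ} {x : ℤ} (hx : x ∈ W) (ζ ω : Config) :
    W.piecewise (flipAt ζ x) ω = flipAt (W.piecewise ζ ω) x := by
  funext y
  by_cases hy : y = x
  · subst hy; simp [flipAt, hx]
  · by_cases hyW : y ∈ W <;> simp [flipAt, hy, hyW]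

lemma measurableSet_eval_eq (x : ℤ) (b : Bool) : MeasurableSet {η : Config | η x = b} :=
  measurable_pi_apply x (measurableSet_singleton _)

/-- The cylinder of configurations agreeing with `ω` on the window `W`. -/
def cylinderAt (W : Finset ℤ) (ω : Config) : Set Config := {η | ∀ x ∈ W, η x = ω x}

lemma cylinderAt_eq_preimage (W : Finset ℤ) (ω : Config) :
    cylinderAt W ω = (W.restrict : Config → W → Bool) ⁻¹' {W.restrict ω} := by
  ext η; simp [cylinderAt, funext_iff]

lemma exists_preimage_restrict_eq_cylinderAt (W : Finset ℤ) (σ : W → Bool) :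
    ∃ ω : Config, (W.restrict : Config → W → Bool) ⁻¹' {σ} = cylinderAt W ω :=
  ⟨Function.updateFinset (fun _ => true) W σ, by
    rw [cylinderAt_eq_preimage, Function.restrict_updateFinset]⟩

lemma measurableSet_cylinderAt (W : Finset ℤ) (ω : Config) : MeasurableSet (cylinderAt W ω) := by
  rw [cylinderAt_eq_preimage]
  exact (W.measurable_restrict) (measurableSet_singleton _)

lemma cylinderAt_congr {W : Finset ℤ} {ω ω' : Config} (h : ∀ x ∈ W, ω x = ω' x) :
    cylinderAt W ω = cylinderAt W ω' := by
  ext η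
  exact forall₂_congr fun x hx => by rw [h x hx]

lemma ext_of_cylinderAt {m₁ m₂ : Measure Config} [IsFiniteMeasure m₁] [IsFiniteMeasure m₂]
    (h : ∀ (W : Finset ℤ) (ω : Config), m₁ (cylinderAt W ω) = m₂ (cylinderAt W ω)) : m₁ = m₂ := by
  refine IsProjectiveLimit.unique (P := fun W => m₁.map W.restrict) (fun _ => rfl) fun W => ?_
  refine Measure.ext_of_singleton fun σ => ?_
  obtain ⟨ω, hω⟩ := exists_preimage_restrict_eq_cylinderAt W σ
  rw [Measure.map_apply W.measurable_restrict (measurableSet_singleton _),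
    Measure.map_apply W.measurable_restrict (measurableSet_singleton _), hω, h]

/-- The density of `π` with respect to `μ` when both are observed through the window `W` only. -/
def localDensity (W : Finset ℤ) (π μ : Measure Config) (ω : Config) : ℝ :=
  π.real (cylinderAt W ω) / μ.real (cylinderAt W ω)

lemma dependsOnF_localDensity (W : Finset ℤ) (π μ : Measure Config) :
    DependsOnF (localDensity W π μ) ↑W := fun ω ω' h => by
  simp only [localDensity, cylinderAt_congr h]

lemma localDensity_nonneg (W : Finset ℤ) (π μ : Measure Config) (ω : Config) :
    0 ≤ localDensity W π μ ω := by
  unfold localDensity; positivity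

lemma integral_localDensity_mul {W : Finset ℤ} {φ : Config → ℝ} (h : DependsOnF φ ↑W)
    (π μ : Measure Config) [IsFiniteMeasure π] [IsFiniteMeasure μ]
    (hμ : ∀ ω, 0 < μ.real (cylinderAt W ω)) :
    ∫ ω, localDensity W π μ ω * φ ω ∂μ = ∫ ω, φ ω ∂π := by
  obtain ⟨g, rfl⟩ := h.exists_comp_restrict
  simp only [localDensity, cylinderAt_eq_preimage, Function.comp_apply]
  have hr : Measurable (W.restrict : Config → W → Bool) := W.measurable_restrict
  rw [integral_comp_eq_sum hr g, integral_comp_eq_sum hr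
      fun σ => π.real ((W.restrict : Config → W → Bool) ⁻¹' {σ}) /
        μ.real ((W.restrict : Config → W → Bool) ⁻¹' {σ}) * g σ]
  refine Finset.sum_congr rfl fun σ _ => ?_
  obtain ⟨ω, hω⟩ := exists_preimage_restrict_eq_cylinderAt W σ
  rw [← mul_assoc, hω, mul_div_cancel₀ _ (hμ ω).ne']

end East

namespace East

/-- The indicator that site `x` is empty. It also serves as the East constraint at `x - 1`. -/
def emptyAt (x : ℤ) (ω : Config) : ℝ := if ω x = false then 1 else 0

/-- The rate at which an unconstrained site `x` flips. -/
def flipRate (p : ℝ) (x : ℤ) (ω : Config) : ℝ := if ω x = false then p else 1 - p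

/-- The squared discrete gradient of `f` at `x`, weighted by the flip rate: the carré du champ of
the unconstrained dynamics at `x`, up to a factor `2`. -/
def sqGrad (p : ℝ) (f : Config → ℝ) (x : ℤ) (ω : Config) : ℝ :=
  flipRate p x ω * (f (flipAt ω x) - f ω) ^ 2

lemma dependsOnF_ite (x : ℤ) (b : Bool) (a c : ℝ) :
    DependsOnF (fun ω => if ω x = b then a else c) {x} := fun ω ω' h => by
  simp only [h x rfl]

lemma dependsOnF_emptyAt (x : ℤ) : DependsOnF (emptyAt x) {x} := dependsOnF_ite x _ _ _

lemma dependsOnF_flipRate (p : ℝ) (x : ℤ) : DependsOnF (flipRate p x) {x} := dependsOnF_ite x _ _ _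

@[fun_prop]
lemma isCylinder_emptyAt (x : ℤ) : IsCylinder (emptyAt x) :=
  ⟨{x}, by simpa using dependsOnF_emptyAt x⟩

@[fun_prop]
lemma continuous_emptyAt (x : ℤ) : Continuous (emptyAt x) := (isCylinder_emptyAt x).continuous

@[fun_prop]
lemma isCylinder_flipRate (p : ℝ) (x : ℤ) : IsCylinder (flipRate p x) :=
  ⟨{x}, by simpa using dependsOnF_flipRate p x⟩

@[fun_prop]
lemma continuous_flipRate (p : ℝ) (x : ℤ) : Continuous (flipRate p x) :=
  (isCylinder_flipRate p x).continuous

@[fun_prop]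
lemma continuous_sqGrad (p : ℝ) {f : Config → ℝ} (hf : Continuous f) (x : ℤ) :
    Continuous (sqGrad p f x) := by
  unfold sqGrad; fun_prop

lemma emptyAt_nonneg (x : ℤ) (ω : Config) : 0 ≤ emptyAt x ω := by
  unfold emptyAt; split_ifs <;> norm_num

lemma emptyAt_le_one (x : ℤ) (ω : Config) : emptyAt x ω ≤ 1 := by
  unfold emptyAt; split_ifs <;> norm_num

lemma eastGen_eq_sum (p : ℝ) {f : Config → ℝ} {S : Finset ℤ} (h : DependsOnF f ↑S) (ω : Config) :
    eastGen p f ω =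
      ∑ x ∈ S, emptyAt (x + 1) ω * flipRate p x ω * (f (flipAt ω x) - f ω) :=
  tsum_eq_sum fun x hx => by rw [h.flipAt_eq hx, sub_self, mul_zero]

@[fun_prop]
lemma isCylinder_eastGen (p : ℝ) {f : Config → ℝ} (hf : IsCylinder f) :
    IsCylinder (eastGen p f) := by
  obtain ⟨S, hS⟩ := id hf
  rw [funext (eastGen_eq_sum p hS)]
  exact .finset_sum S fun x => .mul (by fun_prop) ((hf.comp_flipAt x).sub hf)

end East

open East

namespace EastProcess

instance (E : EastProcess) : IsProbabilityMeasure E.μ := E.μprob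

instance (E : EastProcess) (t : ℝ) : IsMarkovKernel (E.P t) := E.markov t

variable (E : EastProcess) {f g : Config → ℝ}

/-! ### The equilibrium measure -/

lemma flipRate_nonneg (x : ℤ) (ω : Config) : 0 ≤ flipRate E.p x ω := by
  unfold flipRate; split_ifs <;> linarith [E.hp0, E.hp1]

lemma flipRate_le_one (x : ℤ) (ω : Config) : flipRate E.p x ω ≤ 1 := by
  unfold flipRate; split_ifs <;> linarith [E.hp0, E.hp1]

lemma sqGrad_nonneg (f : Config → ℝ) (x : ℤ) (ω : Config) : 0 ≤ sqGrad E.p f x ω :=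
  mul_nonneg (E.flipRate_nonneg x ω) (sq_nonneg _)

/-- The equilibrium probability that a site is in state `b`. -/
def siteProb (b : Bool) : ℝ := if b then E.p else 1 - E.p

lemma siteProb_pos (b : Bool) : 0 < E.siteProb b := by
  cases b <;> simp [siteProb, E.hp0, E.hp1]

lemma real_cylinderAt (W : Finset ℤ) (ω : Config) :
    E.μ.real (cylinderAt W ω) = ∏ x ∈ W, E.siteProb (ω x) := by
  rw [Measure.real, cylinderAt, E.μprod, ENNReal.toReal_prod]
  exact Finset.prod_congr rfl fun x _ => ENNReal.toReal_ofReal (E.siteProb_pos _).le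

lemma real_cylinderAt_pos (W : Finset ℤ) (ω : Config) : 0 < E.μ.real (cylinderAt W ω) := by
  rw [real_cylinderAt]
  exact Finset.prod_pos fun x _ => E.siteProb_pos _

lemma map_piecewise (W : Finset ℤ) :
    (E.μ.prod E.μ).map (fun z : Config × Config => W.piecewise z.1 z.2) = E.μ := by
  have hm : Measurable fun z : Config × Config => W.piecewise z.1 z.2 :=
    (continuous_piecewise W continuous_fst continuous_snd).measurable
  refine ext_of_cylinderAt fun S ω => ?_
  have hpre : (fun z : Config × Config => W.piecewise z.1 z.2) ⁻¹' cylinderAt S ω =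
      cylinderAt (S.filter (· ∈ W)) ω ×ˢ cylinderAt (S.filter (· ∉ W)) ω := by
    ext z
    simp only [cylinderAt, Finset.piecewise, Set.mem_preimage, Set.mem_ofPred_eq, Set.mem_prod,
      Finset.mem_filter]
    grind
  rw [Measure.map_apply hm (measurableSet_cylinderAt _ _), hpre, Measure.prod_prod]
  simp only [cylinderAt, E.μprod]
  exact Finset.prod_filter_mul_prod_filter_not S (· ∈ W) _

lemma integral_piecewise (W : Finset ℤ) (hf : Continuous f) :
    ∫ ω, ∫ ζ, f (W.piecewise ζ ω) ∂E.μ ∂E.μ = ∫ ω, f ω ∂E.μ := by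
  have hc : Continuous fun z : Config × Config => W.piecewise z.1 z.2 := by fun_prop
  conv_rhs => rw [← E.map_piecewise W]
  rw [integral_map hc.measurable.aemeasurable hf.aestronglyMeasurable]
  exact (integral_prod_symm _ (integrable_of_continuous (hf.comp hc) _)).symm

lemma integral_comp_eval (x : ℤ) (φ : Bool → ℝ) :
    ∫ ω, φ (ω x) ∂E.μ = E.p * φ true + (1 - E.p) * φ false := by
  have hcyl (b : Bool) : E.μ.real ((fun ω : Config => ω x) ⁻¹' {b}) = E.siteProb b := by
    have h := E.real_cylinderAt {x} fun _ => b
    simp only [cylinderAt, Finset.mem_singleton, forall_eq, Finset.prod_singleton] at h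
    exact h
  have hm : Measurable fun ω : Config => ω x := measurable_pi_apply x
  rw [integral_comp_eq_sum hm φ]
  simp [hcyl, siteProb]

lemma integral_update (x : ℤ) (hf : Continuous f) :
    ∫ ω, (E.p * f (Function.update ω x true) +
      (1 - E.p) * f (Function.update ω x false)) ∂E.μ = ∫ ω, f ω ∂E.μ := by
  rw [← E.integral_piecewise {x} hf]
  refine integral_congr_ae (ae_of_all _ fun ω => ?_)
  simp only [Finset.piecewise_singleton]
  exact (E.integral_comp_eval x fun b => f (Function.update ω x b)).symm

lemma integral_flipRate_mul_flipAt (x : ℤ) (hf : Continuous f) :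
    ∫ ω, flipRate E.p x ω * f (flipAt ω x) ∂E.μ = ∫ ω, flipRate E.p x ω * f ω ∂E.μ := by
  rw [← E.integral_update x (by fun_prop : Continuous fun ω => flipRate E.p x ω * f (flipAt ω x)),
    ← E.integral_update x (by fun_prop : Continuous fun ω => flipRate E.p x ω * f ω)]
  refine integral_congr_ae (ae_of_all _ fun ω => ?_)
  simp only [flipRate, flipAt_update, Function.update_self, Bool.not_true, Bool.not_false,
    Bool.true_eq_false, if_true, if_false]
  ring

lemma integral_mul_flip_eq (x : ℤ) {c : Config → ℝ} (hc : Continuous c)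
    (hcx : ∀ ω, c (flipAt ω x) = c ω) (hf : Continuous f) (hg : Continuous g) :
    ∫ ω, f ω * (c ω * flipRate E.p x ω * (g (flipAt ω x) - g ω)) ∂E.μ =
      -(1 / 2) * ∫ ω, c ω * flipRate E.p x ω *
        ((f (flipAt ω x) - f ω) * (g (flipAt ω x) - g ω)) ∂E.μ := by
  have hrev := E.integral_flipRate_mul_flipAt x
    (by fun_prop : Continuous fun ω => f ω * (c ω * (g (flipAt ω x) - g ω)))
  simp only [flipAt_flipAt, hcx] at hrev
  have hsplit : ∫ ω, c ω * flipRate E.p x ω *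
      ((f (flipAt ω x) - f ω) * (g (flipAt ω x) - g ω)) ∂E.μ =
      -∫ ω, flipRate E.p x ω * (f (flipAt ω x) * (c ω * (g ω - g (flipAt ω x)))) ∂E.μ -
        ∫ ω, flipRate E.p x ω * (f ω * (c ω * (g (flipAt ω x) - g ω))) ∂E.μ := by
    rw [← integral_neg, ← integral_sub (integrable_of_continuous (by fun_prop) _)
      (integrable_of_continuous (by fun_prop) _)]
    exact integral_congr_ae (ae_of_all _ fun ω => by ring)
  have hfg : ∫ ω, f ω * (c ω * flipRate E.p x ω * (g (flipAt ω x) - g ω)) ∂E.μ =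
      ∫ ω, flipRate E.p x ω * (f ω * (c ω * (g (flipAt ω x) - g ω))) ∂E.μ :=
    integral_congr_ae (ae_of_all _ fun ω => by ring)
  linarith

lemma neg_integral_mul_eastGen {S : Finset ℤ} (h : DependsOnF f ↑S) :
    -∫ ω, f ω * eastGen E.p f ω ∂E.μ =
      1 / 2 * ∑ x ∈ S, ∫ ω, emptyAt (x + 1) ω * sqGrad E.p f x ω ∂E.μ := by
  have hf : Continuous f := IsCylinder.continuous ⟨S, h⟩
  simp only [eastGen_eq_sum E.p h, Finset.mul_sum]
  rw [integral_finsetSum S fun x _ => integrable_of_continuous (by fun_prop) _,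
    ← Finset.sum_neg_distrib]
  refine Finset.sum_congr rfl fun x _ => ?_
  have hx (ω : Config) : emptyAt (x + 1) (flipAt ω x) = emptyAt (x + 1) ω :=
    (dependsOnF_emptyAt _).flipAt_eq (by simp) ω
  rw [E.integral_mul_flip_eq x (by fun_prop) hx hf hf]
  simp only [sqGrad, ← pow_two, mul_assoc]
  ring

lemma gap_mul_variance_le {S : Finset ℤ} (h : DependsOnF f ↑S) :
    gap E * variance f E.μ ≤
      1 / 2 * ∑ x ∈ S, ∫ ω, emptyAt (x + 1) ω * sqGrad E.p f x ω ∂E.μ := by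
  have form_nonneg (f : Config → ℝ) (S : Finset ℤ) :
      0 ≤ 1 / 2 * ∑ x ∈ S, ∫ ω, emptyAt (x + 1) ω * sqGrad E.p f x ω ∂E.μ :=
    mul_nonneg (by norm_num) <| Finset.sum_nonneg fun x _ => integral_nonneg fun ω =>
      mul_nonneg (emptyAt_nonneg _ _) (E.sqGrad_nonneg f x ω)
  rcases (variance_nonneg f E.μ).eq_or_lt with hvar | hvar
  · rw [← hvar, mul_zero]
    exact form_nonneg f S
  · rw [← E.neg_integral_mul_eastGen h, ← le_div_iff₀ hvar]
    refine csInf_le ⟨0, ?_⟩ ⟨f, ⟨S, h⟩, hvar, rfl⟩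
    rintro r ⟨f, ⟨S, h⟩, hv, rfl⟩
    rw [E.neg_integral_mul_eastGen h]
    exact div_nonneg (form_nonneg f S) hv.le

lemma map_shift (y : ℤ) : E.μ.map (shift y) = E.μ := by
  refine ext_of_cylinderAt fun S ω => ?_
  have hpre : shift y ⁻¹' cylinderAt S ω =
      cylinderAt (S.map (addRightEmbedding y)) (shift (-y) ω) := by
    ext η; simp [cylinderAt, shift]
  rw [Measure.map_apply (continuous_shift y).measurable (measurableSet_cylinderAt _ _), hpre]
  simp only [cylinderAt, E.μprod, Finset.prod_map]
  simp [shift]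

lemma integral_comp_shift (y : ℤ) (hf : Continuous f) :
    ∫ ω, f (shift y ω) ∂E.μ = ∫ ω, f ω ∂E.μ := by
  conv_rhs => rw [← E.map_shift y]
  exact (integral_map (continuous_shift y).measurable.aemeasurable hf.aestronglyMeasurable).symm

end EastProcess

/-! ### Feller semigroups and the Dynkin formula -/

namespace East

variable {X : Type*} [MeasurableSpace X] {P : ℝ → Kernel X X} {f g F G : X → ℝ} {t : ℝ}

/-- The action `P_t f (x) = ∫ f dP_t(x, ·)` of a family of kernels on functions. -/
def expect (P : ℝ → Kernel X X) (t : ℝ) (f : X → ℝ) (x : X) : ℝ := ∫ y, f y ∂(P t x)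

/-- `G` is the right derivative of `t ↦ P_t F` at time `0`, pointwise. -/
def HasGenerator (P : ℝ → Kernel X X) (F G : X → ℝ) : Prop :=
  ∀ x, HasDerivWithinAt (fun t => expect P t F x) (G x) (Set.Ici 0) 0

/-- The semigroup law and the continuity properties of a Feller semigroup. The kernels are indexed
by `ℝ`, and only nonnegative times are meaningful. -/
structure IsFellerSemigroup [TopologicalSpace X] (P : ℝ → Kernel X X) : Prop where
  zero : P 0 = Kernel.id
  add : ∀ s t : ℝ, 0 ≤ s → 0 ≤ t → P (t + s) = (P s).comp (P t)
  continuous_expect : ∀ t : ℝ, 0 ≤ t → ∀ f : X → ℝ, Continuous f → Continuous (expect P t f)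
  continuous_time : ∀ f : X → ℝ, Continuous f → ∀ x, Continuous fun t => expect P t f x

/-- The resolvent `∫₀^∞ e^{-s} P_s f ds` at `1`. -/
def resolvent (P : ℝ → Kernel X X) (f : X → ℝ) (x : X) : ℝ :=
  ∫ s in Set.Ioi (0 : ℝ), Real.exp (-s) * expect P s f x

lemma expect_neg (t : ℝ) (x : X) : expect P t (fun y => -f y) x = -expect P t f x :=
  integral_neg f

lemma resolvent_neg (x : X) : resolvent P (fun y => -f y) x = -resolvent P f x := by
  simp only [resolvent, expect_neg, mul_neg, integral_neg]

lemma HasGenerator.neg (h : HasGenerator P F G) :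
    HasGenerator P (fun x => -F x) (fun x => -G x) := fun x => by
  simp only [expect_neg]
  exact (h x).neg

lemma hasDerivAt_exp_mul_sub_integral {φ : ℝ → ℝ} (hφ : Continuous φ) (c h : ℝ) :
    HasDerivAt (fun h => Real.exp h * (c - ∫ s in (0 : ℝ)..h, Real.exp (-s) * φ s))
      (Real.exp h * (c - ∫ s in (0 : ℝ)..h, Real.exp (-s) * φ s) - φ h) h := by
  have hc : Continuous fun s => Real.exp (-s) * φ s := by fun_prop
  have hint := (hc.integral_hasStrictDerivAt 0 h).hasDerivAt
  refine ((Real.hasDerivAt_exp h).mul (hint.const_sub c)).congr_deriv ?_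
  have hexp : Real.exp h * Real.exp (-h) = 1 := by rw [← Real.exp_add]; simp
  linear_combination (-φ h) * hexp

lemma measurable_expect [TopologicalSpace X] [OpensMeasurableSpace X] (t : ℝ)
    (hf : Continuous f) : Measurable (expect P t f) :=
  hf.stronglyMeasurable.integral_kernel.measurable

section Markov

variable [∀ t, IsMarkovKernel (P t)]

lemma abs_expect_le (t : ℝ) {b : ℝ} (hb : ∀ x, |f x| ≤ b) (x : X) : |expect P t f x| ≤ b := by
  simpa [expect] using norm_integral_le_of_norm_le_const (μ := P t x) (f := f) (C := b)
    (ae_of_all _ hb)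

@[simp]
lemma expect_const (c : ℝ) (t : ℝ) (x : X) : expect P t (fun _ => c) x = c := by
  simp [expect]

lemma norm_exp_mul_expect_le (s : ℝ) {b : ℝ} (hb : ∀ x, |f x| ≤ b) (x : X) :
    ‖Real.exp (-s) * expect P s f x‖ ≤ Real.exp (-s) * b := by
  rw [norm_mul, Real.norm_eq_abs, Real.abs_exp]
  exact mul_le_mul_of_nonneg_left (abs_expect_le s hb x) (Real.exp_nonneg _)

variable [TopologicalSpace X] [OpensMeasurableSpace X] [CompactSpace X]

lemma integral_expect (t : ℝ) (hf : Continuous f) (m : Measure X) [IsFiniteMeasure m] :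
    ∫ x, expect P t f x ∂m = ∫ x, f x ∂(m.bind (P t)) := by
  have h := Kernel.integral_comp (κ := Kernel.const Unit m) (η := P t) (a := ())
    (integrable_of_continuous hf _)
  rw [Kernel.comp_apply, Kernel.const_apply] at h
  exact h.symm

lemma expect_mono (t : ℝ) (hf : Continuous f) (hg : Continuous g) (h : ∀ x, f x ≤ g x) (x : X) :
    expect P t f x ≤ expect P t g x :=
  integral_mono (integrable_of_continuous hf _) (integrable_of_continuous hg _) h

lemma expect_sub (t : ℝ) (hf : Continuous f) (hg : Continuous g) (x : X) :
    expect P t (fun y => f y - g y) x = expect P t f x - expect P t g x :=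
  integral_sub (integrable_of_continuous hf _) (integrable_of_continuous hg _)

end Markov

namespace IsFellerSemigroup

variable [TopologicalSpace X]

section

variable [CompactSpace X] [∀ t, IsMarkovKernel (P t)]

lemma integrableOn_resolvent (hP : IsFellerSemigroup P) (hf : Continuous f) (x : X) :
    IntegrableOn (fun s => Real.exp (-s) * expect P s f x) (Set.Ioi 0) := by
  obtain ⟨b, hb⟩ := exists_abs_le_of_continuous hf
  have hc : Continuous fun s => expect P s f x := hP.continuous_time f hf x
  exact ((integrableOn_exp_neg_Ioi 0).mul_const b).mono'
    (by fun_prop : Continuous fun s => Real.exp (-s) * expect P s f x).aestronglyMeasurable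
    (ae_of_all _ fun s => norm_exp_mul_expect_le s hb x)

lemma continuous_resolvent [FirstCountableTopology X] (hP : IsFellerSemigroup P)
    (hf : Continuous f) : Continuous (resolvent P f) := by
  obtain ⟨b, hb⟩ := exists_abs_le_of_continuous hf
  refine continuous_of_dominated (bound := fun s => Real.exp (-s) * b)
    (fun x => (hP.integrableOn_resolvent hf x).aestronglyMeasurable)
    (fun x => ae_of_all _ fun s => norm_exp_mul_expect_le s hb x)
    ((integrableOn_exp_neg_Ioi 0).mul_const b) ?_
  refine (ae_restrict_mem measurableSet_Ioi).mono fun s hs => ?_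
  have := hP.continuous_expect s (Set.mem_Ioi.1 hs).le f hf
  fun_prop

end

variable [OpensMeasurableSpace X]

lemma expect_zero (hP : IsFellerSemigroup P) (hf : Continuous f) (x : X) :
    expect P 0 f x = f x := by
  rw [expect, hP.zero, Kernel.id_apply, integral_dirac' _ _ hf.stronglyMeasurable]

lemma tendsto_expect_sub_div (hP : IsFellerSemigroup P) (hF : Continuous F)
    (hFG : HasGenerator P F G) (x : X) :
    Tendsto (fun t => (expect P t F x - F x) / t) (𝓝[>] 0) (𝓝 (G x)) := by
  have hderiv := (hFG x).mono Set.Ioi_subset_Ici_self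
  rw [hasDerivWithinAt_iff_tendsto_slope' Set.self_notMem_Ioi] at hderiv
  simpa only [slope_fun_def_field, hP.expect_zero hF, sub_zero] using hderiv

lemma measurable_uncurry_expect (hP : IsFellerSemigroup P) (hf : Continuous f) :
    Measurable fun z : ℝ × X => expect P z.1 f z.2 :=
  measurable_uncurry_of_continuous_of_measurable (u := fun t x => expect P t f x)
    (fun x => hP.continuous_time f hf x) fun t => measurable_expect t hf

variable [CompactSpace X] [∀ t, IsMarkovKernel (P t)]

lemma expect_add (hP : IsFellerSemigroup P) (hf : Continuous f) {s : ℝ} (ht : 0 ≤ t) (hs : 0 ≤ s)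
    (x : X) : expect P (t + s) f x = expect P t (expect P s f) x := by
  unfold expect
  rw [hP.add s t hs ht, Kernel.integral_comp]
  rw [← hP.add s t hs ht]
  exact integrable_of_continuous hf _

lemma expect_resolvent_eq_integral (hP : IsFellerSemigroup P) (hf : Continuous f) (ht : 0 ≤ t)
    (x : X) : expect P t (resolvent P f) x =
      ∫ s in Set.Ioi (0 : ℝ), Real.exp (-s) * expect P (s + t) f x := by
  obtain ⟨b, hb⟩ := exists_abs_le_of_continuous hf
  have hm : Measurable fun z : X × ℝ => Real.exp (-z.2) * expect P z.2 f z.1 :=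
    (by fun_prop : Measurable fun z : X × ℝ => Real.exp (-z.2)).mul
      ((hP.measurable_uncurry_expect hf).comp measurable_swap)
  have hdom : Integrable (fun z : X × ℝ => b * Real.exp (-z.2))
      ((P t x).prod (volume.restrict (Set.Ioi 0))) :=
    (integrable_const b).mul_prod (integrableOn_exp_neg_Ioi 0)
  have hint := hdom.mono' hm.aestronglyMeasurable
    (ae_of_all _ fun z => (norm_exp_mul_expect_le z.2 hb z.1).trans_eq (mul_comm _ _))
  refine (integral_integral_swap hint).trans ?_
  refine setIntegral_congr_fun measurableSet_Ioi fun s hs => ?_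
  rw [add_comm, hP.expect_add hf ht (Set.mem_Ioi.1 hs).le]
  exact integral_const_mul _ _

lemma expect_resolvent (hP : IsFellerSemigroup P) (hf : Continuous f) (ht : 0 ≤ t) (x : X) :
    expect P t (resolvent P f) x =
      Real.exp t * (resolvent P f x - ∫ s in (0 : ℝ)..t, Real.exp (-s) * expect P s f x) := by
  have hint := hP.integrableOn_resolvent hf x
  have htail := intervalIntegral.integral_interval_add_Ioi hint
    (hint.mono_set (Set.Ioi_subset_Ioi ht))
  have hshift := (measurePreserving_add_right volume t).setIntegral_preimage_emb
    (MeasurableEquiv.addRight t).measurableEmbedding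
    (fun s => Real.exp (-s) * expect P s f x) (Set.Ioi t)
  simp only [Set.preimage_add_const_Ioi, sub_self] at hshift
  rw [hP.expect_resolvent_eq_integral hf ht, resolvent, ← htail, add_sub_cancel_left, ← hshift,
    ← integral_const_mul]
  congr 1 with s
  rw [← mul_assoc, ← Real.exp_add]
  ring_nf

lemma hasGenerator_resolvent (hP : IsFellerSemigroup P) (hf : Continuous f) :
    HasGenerator P (resolvent P f) (fun x => resolvent P f x - f x) := fun x => by
  have hderiv := (hasDerivAt_exp_mul_sub_integral (hP.continuous_time f hf x)
    (resolvent P f x) 0).hasDerivWithinAt (s := Set.Ici 0)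
  refine (hderiv.congr (fun u hu => hP.expect_resolvent hf hu x)
    (hP.expect_resolvent hf le_rfl x)).congr_deriv ?_
  simp [hP.expect_zero hf]

lemma generator_nonpos_of_isMax (hP : IsFellerSemigroup P) (hF : Continuous F)
    (hFG : HasGenerator P F G) {x₀ : X} (hmax : ∀ x, F x ≤ F x₀) : G x₀ ≤ 0 := by
  refine le_of_tendsto (hP.tendsto_expect_sub_div hF hFG x₀)
    (eventually_nhdsWithin_of_forall fun u (hu : 0 < u) => ?_)
  refine div_nonpos_of_nonpos_of_nonneg (sub_nonpos.2 ?_) hu.le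
  exact (expect_mono u hF continuous_const hmax x₀).trans_eq (expect_const _ _ _)

variable [FirstCountableTopology X]

lemma le_resolvent_sub (hP : IsFellerSemigroup P) (hF : Continuous F) (hG : Continuous G)
    (hFG : HasGenerator P F G) (x : X) : F x ≤ resolvent P (fun y => F y - G y) x := by
  have hf : Continuous fun y => F y - G y := by fun_prop
  have hR := hP.continuous_resolvent hf
  have hw : Continuous fun y => F y - resolvent P (fun y => F y - G y) y := by fun_prop
  obtain ⟨x₀, -, hmax⟩ := isCompact_univ.exists_isMaxOn ⟨x, trivial⟩ hw.continuousOn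
  have hgen : HasGenerator P (fun y => F y - resolvent P (fun y => F y - G y) y)
      (fun y => G y - (resolvent P (fun y => F y - G y) y - (F y - G y))) := fun y => by
    simp only [expect_sub _ hF hR]
    exact (hFG y).sub (hP.hasGenerator_resolvent hf y)
  have h₀ := hP.generator_nonpos_of_isMax hw hgen fun y => hmax (Set.mem_univ y)
  have hx := isMaxOn_iff.1 hmax x trivial
  linarith

-- The maximum principle alone identifies `F` with the resolvent of `F - G`: no core is needed.
lemma resolvent_sub_eq (hP : IsFellerSemigroup P) (hF : Continuous F) (hG : Continuous G)
    (hFG : HasGenerator P F G) : resolvent P (fun y => F y - G y) = F := by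
  funext x
  refine le_antisymm ?_ (hP.le_resolvent_sub hF hG hFG x)
  have h := hP.le_resolvent_sub hF.neg hG.neg hFG.neg x
  simp only [Pi.neg_apply, ← neg_sub', resolvent_neg] at h
  exact neg_le_neg_iff.1 h

theorem expect_sub_eq_integral (hP : IsFellerSemigroup P) (hF : Continuous F) (hG : Continuous G)
    (hFG : HasGenerator P F G) (ht : 0 ≤ t) (x : X) :
    expect P t F x - F x = ∫ s in (0 : ℝ)..t, expect P s G x := by
  have hf : Continuous fun y => F y - G y := by fun_prop
  have hexpect : ∀ h, 0 ≤ h → expect P h F x = Real.exp h *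
      (F x - ∫ s in (0 : ℝ)..h, Real.exp (-s) * expect P s (fun y => F y - G y) x) := fun h hh => by
    have := hP.expect_resolvent hf hh x
    rwa [hP.resolvent_sub_eq hF hG hFG] at this
  rw [intervalIntegral.integral_eq_sub_of_hasDerivAt (f := fun h => Real.exp h *
    (F x - ∫ s in (0 : ℝ)..h, Real.exp (-s) * expect P s (fun y => F y - G y) x)) ?_
    ((hP.continuous_time G hG x).intervalIntegrable _ _), hexpect t ht]
  · simp
  · intro s hs
    rw [Set.uIcc_of_le ht] at hs
    refine (hasDerivAt_exp_mul_sub_integral (hP.continuous_time _ hf x) (F x) s).congr_deriv ?_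
    rw [← hexpect s hs.1, expect_sub _ hF hG, sub_sub_cancel]

lemma expect_le_add_integral (hP : IsFellerSemigroup P) (hF : Continuous F) (hG : Continuous G)
    (hFG : HasGenerator P F G) {φ : ℝ → ℝ} (hφ : Continuous φ) (ht : 0 ≤ t) {x : X}
    (hle : ∀ s ∈ Set.Icc 0 t, expect P s G x ≤ φ s) :
    expect P t F x ≤ F x + ∫ s in (0 : ℝ)..t, φ s := by
  rw [← sub_le_iff_le_add', hP.expect_sub_eq_integral hF hG hFG ht]
  exact intervalIntegral.integral_mono_on ht
    ((hP.continuous_time G hG x).intervalIntegrable _ _) (hφ.intervalIntegrable _ _) hle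

lemma tendsto_integral_expect_sub_div (hP : IsFellerSemigroup P) (hF : Continuous F)
    (hG : Continuous G) (hFG : HasGenerator P F G) (m : Measure X) [IsFiniteMeasure m] :
    Tendsto (fun t => ∫ x, (expect P t F x - F x) / t ∂m) (𝓝[>] 0) (𝓝 (∫ x, G x ∂m)) := by
  obtain ⟨b, hb⟩ := exists_abs_le_of_continuous hG
  refine tendsto_integral_filter_of_dominated_convergence (fun _ => b) ?_ ?_
    (integrable_const _) ?_
  · exact .of_forall fun t =>
      (((measurable_expect t hF).sub hF.measurable).div_const t).aestronglyMeasurable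
  · refine eventually_nhdsWithin_of_forall fun t (ht : 0 < t) => ae_of_all _ fun x => ?_
    rw [Real.norm_eq_abs, abs_div, abs_of_pos ht, div_le_iff₀ ht,
      hP.expect_sub_eq_integral hF hG hFG ht.le]
    simpa [abs_of_pos ht] using intervalIntegral.norm_integral_le_of_norm_le_const (a := 0) (b := t)
      (f := fun s => expect P s G x) (C := b) fun s _ => abs_expect_le s hb x
  · exact ae_of_all _ fun x => hP.tendsto_expect_sub_div hF hFG x

lemma integral_generator_eq_zero (hP : IsFellerSemigroup P) (hF : Continuous F)
    (hG : Continuous G) (hFG : HasGenerator P F G) {m : Measure X} [IsFiniteMeasure m]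
    (hm : ∀ t, 0 ≤ t → m.bind (P t) = m) : ∫ x, G x ∂m = 0 := by
  have hzero (t : ℝ) (ht : 0 < t) : ∫ x, (expect P t F x - F x) / t ∂m = 0 := by
    rw [integral_div, integral_sub (integrable_of_continuous (hP.continuous_expect t ht.le F hF) m)
      (integrable_of_continuous hF m), integral_expect t hF, hm t ht.le, sub_self, zero_div]
  exact tendsto_nhds_unique (hP.tendsto_integral_expect_sub_div hF hG hFG m)
    (tendsto_const_nhds.congr' (eventually_nhdsWithin_of_forall fun t ht => (hzero t ht).symm))

end IsFellerSemigroup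

end East

/-! ### Finite speed of propagation -/

namespace East

lemma integral_pow_div_factorial (k : ℕ) (t : ℝ) :
    ∫ s in (0 : ℝ)..t, s ^ k / (k.factorial : ℝ) = t ^ (k + 1) / ((k + 1).factorial : ℝ) := by
  rw [intervalIntegral.integral_div, integral_pow, Nat.factorial_succ, zero_pow k.succ_ne_zero]
  push_cast
  field_simp
  ring

end East

namespace EastProcess

variable (E : EastProcess) {F G : Config → ℝ} {ω : Config} {t : ℝ}

lemma isFellerSemigroup : IsFellerSemigroup E.P :=
  ⟨E.P0, E.semigroup, E.feller, E.timeCont⟩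

lemma hasGenerator_eastGen (hF : IsCylinder F) : HasGenerator E.P F (eastGen E.p F) :=
  E.generator F hF

lemma expect_le_of_eastGen_le (hF : IsCylinder F) (hG : Continuous G)
    (hFG : ∀ η, eastGen E.p F η ≤ G η) {φ : ℝ → ℝ} (hφ : Continuous φ) (ht : 0 ≤ t)
    (hGφ : ∀ s ∈ Set.Icc 0 t, expect E.P s G ω ≤ φ s) :
    expect E.P t F ω ≤ F ω + ∫ s in (0 : ℝ)..t, φ s :=
  E.isFellerSemigroup.expect_le_add_integral hF.continuous
    (isCylinder_eastGen E.p hF).continuous (E.hasGenerator_eastGen hF) hφ ht fun s hs =>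
      (expect_mono s (isCylinder_eastGen E.p hF).continuous hG hFG ω).trans (hGφ s hs)

lemma eastGen_le_emptyAt {x : ℤ} (h : DependsOnF F {x}) (h₀ : ∀ η, 0 ≤ F η) (h₁ : ∀ η, F η ≤ 1)
    (η : Config) : eastGen E.p F η ≤ emptyAt (x + 1) η := by
  have hF : DependsOnF F ↑({x} : Finset ℤ) := by simpa using h
  rw [eastGen_eq_sum E.p hF, Finset.sum_singleton, mul_assoc]
  refine mul_le_of_le_one_right (emptyAt_nonneg _ _) ?_
  have := E.flipRate_nonneg x η
  have := E.flipRate_le_one x η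
  nlinarith [h₀ η, h₁ (flipAt η x)]

lemma eastGen_emptyAt_le (x : ℤ) (η : Config) :
    eastGen E.p (emptyAt x) η ≤ emptyAt (x + 1) η :=
  E.eastGen_le_emptyAt (dependsOnF_emptyAt x) (emptyAt_nonneg x) (emptyAt_le_one x) η

lemma expect_emptyAt_le_one (t : ℝ) (x : ℤ) (ω : Config) : expect E.P t (emptyAt x) ω ≤ 1 :=
  (expect_mono t (continuous_emptyAt x) continuous_const (emptyAt_le_one x) ω).trans_eq
    (expect_const 1 t ω)

lemma expect_emptyAt_le (k : ℕ) {x : ℤ} (hω : ∀ i : ℕ, i < k → ω (x + i) = true) (ht : 0 ≤ t) :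
    expect E.P t (emptyAt x) ω ≤ t ^ k / (k.factorial : ℝ) := by
  induction k generalizing x t with
  | zero => simpa using E.expect_emptyAt_le_one t x ω
  | succ k ih =>
    have hx : emptyAt x ω = 0 := by simpa [emptyAt] using hω 0 k.succ_pos
    have hshift (i : ℕ) (hi : i < k) : ω (x + 1 + i) = true := by
      simpa [add_assoc, add_comm (1 : ℤ)] using hω (i + 1) (by lia)
    have h := E.expect_le_of_eastGen_le (isCylinder_emptyAt x) (continuous_emptyAt (x + 1))
      (E.eastGen_emptyAt_le x) (by fun_prop) ht fun s hs => ih hshift hs.1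
    rwa [integral_pow_div_factorial, hx, zero_add] at h

lemma eastGen_one_sub_emptyAt_le (x : ℤ) (η : Config) :
    eastGen E.p (fun η => 1 - emptyAt x η) η ≤ emptyAt (x + 1) η :=
  E.eastGen_le_emptyAt (fun _ _ h => congrArg (1 - ·) (dependsOnF_emptyAt x _ _ h))
    (fun η => sub_nonneg.2 (emptyAt_le_one x η)) (fun η => sub_le_self _ (emptyAt_nonneg x η)) η

lemma expect_one_sub_emptyAt_zero_le (hω : ω 0 = false) (ht : 0 ≤ t) :
    expect E.P t (fun η => 1 - emptyAt 0 η) ω ≤ t := by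
  have h := E.expect_le_of_eastGen_le (by fun_prop) (continuous_emptyAt _)
    (E.eastGen_one_sub_emptyAt_le 0) (continuous_const (y := (1 : ℝ))) ht
    fun s _ => E.expect_emptyAt_le_one s _ ω
  simpa [emptyAt, hω] using h

lemma eastGen_occupied_pair_le (η : Config) :
    eastGen E.p (fun η => (1 - emptyAt 0 η) * (1 - emptyAt 1 η)) η ≤ 1 - emptyAt 0 η := by
  have hdep : DependsOnF (fun η => (1 - emptyAt 0 η) * (1 - emptyAt 1 η)) ↑({0, 1} : Finset ℤ) :=
    fun ω ω' h => by simp only [emptyAt, h 0 (by simp), h 1 (by simp)]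
  rw [eastGen_eq_sum E.p hdep, Finset.sum_pair (by norm_num)]
  have := E.flipRate_nonneg 1 η
  have := E.flipRate_le_one 1 η
  have := E.flipRate_nonneg 0 η
  cases h0 : η 0 <;> cases h1 : η 1 <;> cases h2 : η 2 <;>
    simp [emptyAt, flipAt, h0, h1, h2] <;> linarith

-- From an empty origin, the first of the two sites to become occupied must be `0`.
lemma expect_occupied_pair_le (hω : ω 0 = false) (ht : 0 ≤ t) :
    expect E.P t (fun η => (1 - emptyAt 0 η) * (1 - emptyAt 1 η)) ω ≤ t ^ 2 := by
  have h := E.expect_le_of_eastGen_le (by fun_prop) (by fun_prop) E.eastGen_occupied_pair_le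
    continuous_id ht fun s hs => E.expect_one_sub_emptyAt_zero_le hω hs.1
  have h₀ : emptyAt 0 ω = 1 := by simp [emptyAt, hω]
  simp only [id_eq, integral_id, h₀] at h
  nlinarith [sq_nonneg t]

lemma expect_emptyAt_eq_real (t : ℝ) (x : ℤ) (ω : Config) :
    expect E.P t (emptyAt x) ω = (E.P t ω).real {η | η x = false} := by
  rw [← integral_indicator_one (measurableSet_eval_eq x false), expect]
  congr 1 with η
  by_cases h : η x = false <;> simp [emptyAt, h]

lemma expect_occupied_pair_eq_real (t : ℝ) (ω : Config) :
    expect E.P t (fun η => (1 - emptyAt 0 η) * (1 - emptyAt 1 η)) ω =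
      (E.P t ω).real {η | η 0 = true ∧ η 1 = true} := by
  have hm : MeasurableSet {η : Config | η 0 = true ∧ η 1 = true} :=
    (measurableSet_eval_eq 0 true).inter (measurableSet_eval_eq 1 true)
  rw [← integral_indicator_one hm, expect]
  congr 1 with η
  by_cases h₀ : η 0 = true <;> by_cases h₁ : η 1 = true <;> simp [emptyAt, h₀, h₁]

end EastProcess

/-! ### Stationarity seen from the front -/

namespace East

lemma front_eq {η : Config} {y : ℤ} (hy : η y = false) (hlt : ∀ x < y, η x = true) :
    front η = y := by
  refine IsLeast.csInf_eq ⟨hy, fun x hx => ?_⟩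
  contrapose! hx
  simp [hlt x hx]

lemma apply_front_eq_false_and_lt {η : Config} (hη : η ∈ LO) :
    η (front η) = false ∧ ∀ x < front η, η x = true := by
  obtain ⟨⟨y, hy⟩, x, hx⟩ := hη
  have hbdd : BddBelow {x : ℤ | η x = false} :=
    ⟨y, fun z (hz : η z = false) => not_lt.1 fun hzy => by simp [hy z hzy] at hz⟩
  exact ⟨Int.csInf_mem (s := {x : ℤ | η x = false}) ⟨x, hx⟩ hbdd, fun z hz =>
    Bool.eq_true_of_not_eq_false fun hz' => hz.not_ge (csInf_le hbdd hz')⟩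

lemma mem_LO₀_iff {η : Config} : η ∈ LO₀ ↔ η 0 = false ∧ ∀ x < 0, η x = true := by
  refine ⟨fun ⟨hη, hfront⟩ => hfront ▸ apply_front_eq_false_and_lt hη, fun ⟨h₀, hneg⟩ =>
    ⟨⟨⟨0, hneg⟩, 0, h₀⟩, front_eq h₀ hneg⟩⟩

lemma measurableSet_LO₀ : MeasurableSet LO₀ := by
  have hLO₀ : LO₀ = {η : Config | η 0 = false} ∩ ⋂ x : ℤ, ⋂ _ : x < 0, {η | η x = true} := by
    ext η
    simp [mem_LO₀_iff]
  rw [hLO₀]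
  exact (measurableSet_eval_eq _ _).inter
    (.iInter fun x => .iInter fun _ => measurableSet_eval_eq _ _)

/-- Outside of this set, the front is at `-1`, `0` or `1`. Its two parts are unlikely after a short
time, starting from a front at `0`. -/
def farFront : Set Config :=
  {η | η 0 = true ∧ η 1 = true} ∪ ⋃ k : ℕ, {η | η (-(k + 2 : ℤ)) = false}

lemma measurableSet_farFront : MeasurableSet farFront :=
  ((measurableSet_eval_eq 0 true).inter (measurableSet_eval_eq 1 true)).union
    (.iUnion fun _ => measurableSet_eval_eq _ _)

lemma eq_true_of_notMem_farFront {η : Config} (hη : η ∉ farFront) {x : ℤ} (hx : x < -1) :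
    η x = true := by
  contrapose! hη
  refine .inr (Set.mem_iUnion.2 ⟨(-x - 2).toNat, ?_⟩)
  have hk : -(((-x - 2).toNat : ℤ) + 2) = x := by lia
  rw [Set.mem_ofPred_eq, hk]
  exact Bool.eq_false_of_not_eq_true hη

/-- The local function giving the value of `u` seen from the front, when the front is at `-1`, `0`
or `1`. -/
def fromFront (u : Config → ℝ) (ω : Config) : ℝ :=
  if ω (-1) = false then u (shift (-1) ω) else
    if ω 0 = false then u ω else if ω 1 = false then u (shift 1 ω) else 0

section fromFront

variable {u : Config → ℝ} {n : ℤ}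

lemma dependsOnF_fromFront (hn : 0 ≤ n) (hu : DependsOnF u ↑(Finset.Icc 1 n)) :
    DependsOnF (fromFront u) ↑(Finset.Icc (-1) (n + 1)) := by
  intro ω ω' h
  simp only [Finset.coe_Icc, Set.mem_Icc] at h
  have hshift (y : ℤ) (hy : -1 ≤ y ∧ y ≤ 1) : u (shift y ω) = u (shift y ω') :=
    hu _ _ fun x hx => h _ (by simp only [Finset.coe_Icc, Set.mem_Icc] at hx; lia)
  have hzero : u ω = u ω' :=
    hu _ _ fun x hx => h _ (by simp only [Finset.coe_Icc, Set.mem_Icc] at hx; lia)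
  simp only [fromFront, h (-1) (by lia), h 0 (by lia), h 1 (by lia), hshift (-1) (by lia), hzero,
    hshift 1 (by lia)]

lemma apply_θL_zero (hu : DependsOnF u ↑(Finset.Icc 1 n)) {η : Config} {y : ℤ}
    (hη : front η = y) : u (θL 0 η) = u (shift y η) := by
  refine hu _ _ fun x hx => ?_
  have hx : 0 < x := by simp only [Finset.coe_Icc, Set.mem_Icc] at hx; lia
  simp only [θL, shift, hη, hx.not_gt, hx.ne', if_false]
  congr 1
  ring

lemma apply_θL_eq_fromFront (hu : DependsOnF u ↑(Finset.Icc 1 n)) {η : Config}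
    (hη : η ∉ farFront) : u (θL 0 η) = fromFront u η := by
  have hpair : ¬(η 0 = true ∧ η 1 = true) := fun h => hη (.inl h)
  have hfar (x : ℤ) (hx : x < -1) := eq_true_of_notMem_farFront hη hx
  unfold fromFront
  split_ifs with hm1 h0 h1
  · exact apply_θL_zero hu (front_eq hm1 hfar)
  · have hfront : front η = 0 := front_eq h0 fun x hx => by
      rcases (show x ≤ -1 by lia).eq_or_lt with rfl | hx
      exacts [by simpa using hm1, hfar x hx]
    rw [apply_θL_zero hu hfront]
    exact congrArg u (funext fun x => congrArg η (add_zero x))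
  · refine apply_θL_zero hu (front_eq h1 fun x hx => ?_)
    obtain rfl | rfl | hx : x = 0 ∨ x = -1 ∨ x < -1 := by lia
    exacts [by simpa using h0, by simpa using hm1, hfar x hx]
  · simp [h0, h1] at hpair

variable {ω : Config}

lemma fromFront_of_mem_LO₀ (u : Config → ℝ) (hω : ω ∈ LO₀) : fromFront u ω = u ω := by
  rw [mem_LO₀_iff] at hω
  simp [fromFront, hω.1, hω.2 (-1) (by norm_num)]

lemma fromFront_flipAt_neg_one (hu : DependsOnF u ↑(Finset.Icc 1 n)) (hω : ω ∈ LO₀) :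
    fromFront u (flipAt ω (-1)) = u (shift (-1) ω) := by
  rw [mem_LO₀_iff] at hω
  rw [fromFront, if_pos (by simp [flipAt, hω.2])]
  refine hu _ _ fun x hx => ?_
  simp only [Finset.coe_Icc, Set.mem_Icc] at hx
  exact if_neg (by lia)

lemma fromFront_flipAt_zero (hu : DependsOnF u ↑(Finset.Icc 1 n)) (hω : ω ∈ LO₀)
    (h₁ : ω 1 = false) : fromFront u (flipAt ω 0) = u (shift 1 ω) := by
  rw [mem_LO₀_iff] at hω
  rw [fromFront, if_neg (by simp [flipAt, hω.2]), if_neg (by simp [flipAt, hω.1]),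
    if_pos (by simp [flipAt, h₁])]
  refine hu _ _ fun x hx => ?_
  simp only [Finset.coe_Icc, Set.mem_Icc] at hx
  exact if_neg (by lia)

lemma fromFront_flipAt_of_pos (hω : ω ∈ LO₀) {x : ℤ} (hx : 0 < x) :
    fromFront u (flipAt ω x) = u (flipAt ω x) := by
  rw [mem_LO₀_iff] at hω
  rw [fromFront, if_neg, if_pos]
  · simp [flipAt, hx.ne, hω.1]
  · simp [flipAt, (neg_one_lt_zero.trans hx).ne, hω.2]

lemma eastGen_fromFront (p : ℝ) (hn : 0 ≤ n) (hu : DependsOnF u ↑(Finset.Icc 1 n))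
    (hω : ω ∈ LO₀) :
    eastGen p (fromFront u) ω =
      ∑ x ∈ Finset.Icc 1 n, emptyAt (x + 1) ω * flipRate p x ω * (u (flipAt ω x) - u ω) +
        (1 - p) * (u (shift (-1) ω) - u ω) + emptyAt 1 ω * p * (u (shift 1 ω) - u ω) := by
  have hbulk : ∑ x ∈ Finset.Icc 1 n,
      emptyAt (x + 1) ω * flipRate p x ω * (fromFront u (flipAt ω x) - u ω) =
        ∑ x ∈ Finset.Icc 1 n, emptyAt (x + 1) ω * flipRate p x ω * (u (flipAt ω x) - u ω) :=
    Finset.sum_congr rfl fun x hx => by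
      rw [fromFront_flipAt_of_pos hω (Int.lt_of_lt_of_le zero_lt_one (Finset.mem_Icc.1 hx).1)]
  have hzero : emptyAt 1 ω * (fromFront u (flipAt ω 0) - u ω) =
      emptyAt 1 ω * (u (shift 1 ω) - u ω) := by
    by_cases h₁ : ω 1 = false
    · rw [fromFront_flipAt_zero hu hω h₁]
    · simp [emptyAt, h₁]
  have hright : u (flipAt ω (n + 1)) = u ω := hu.flipAt_eq (by simp) ω
  have hwindow : Finset.Icc (-1) (n + 1) =
      insert (-1) (insert 0 (insert (n + 1) (Finset.Icc 1 n))) := by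
    ext x
    simp only [Finset.mem_Icc, Finset.mem_insert]
    lia
  rw [eastGen_eq_sum p (dependsOnF_fromFront hn hu), hwindow,
    Finset.sum_insert (by simp; lia), Finset.sum_insert (by simp; lia),
    Finset.sum_insert (by simp), fromFront_of_mem_LO₀ u hω, hbulk,
    fromFront_flipAt_neg_one hu hω, fromFront_flipAt_of_pos hω (x := n + 1) (by lia), hright]
  rw [mem_LO₀_iff] at hω
  simp only [zero_add, neg_add_cancel, emptyAt, flipRate, hω.1, hω.2 (-1) neg_one_lt_zero,
    Bool.true_eq_false, if_true, if_false] at hzero ⊢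
  linear_combination p * hzero

end fromFront

lemma hasSum_one_div_factorial : HasSum (fun k : ℕ => 1 / (k.factorial : ℝ)) (Real.exp 1) := by
  simpa [Real.exp_eq_exp_ℝ] using NormedSpace.expSeries_div_hasSum_exp (𝔸 := ℝ) (1 : ℝ)

end East

namespace EastProcess

variable (E : EastProcess) {ω : Config} {t : ℝ}

lemma measure_empty_left_le (hω : ω ∈ LO₀) (ht : 0 ≤ t) (ht₁ : t ≤ 1) (k : ℕ) :
    E.P t ω {η | η (-(k + 2 : ℤ)) = false} ≤ ENNReal.ofReal (t ^ 2 * (1 / (k.factorial : ℝ))) := by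
  rw [← ofReal_measureReal, ← expect_emptyAt_eq_real]
  refine ENNReal.ofReal_le_ofReal ((E.expect_emptyAt_le (k + 2)
    (fun i hi => (mem_LO₀_iff.1 hω).2 _ (by lia)) ht).trans ?_)
  rw [mul_one_div]
  gcongr ?_ / (Nat.factorial ?_ : ℝ)
  · exact pow_le_pow_of_le_one ht ht₁ (by lia)
  · lia

lemma measure_farFront_le (hω : ω ∈ LO₀) (ht : 0 ≤ t) (ht₁ : t ≤ 1) :
    E.P t ω farFront ≤ ENNReal.ofReal (t ^ 2 * (1 + Real.exp 1)) := by
  have hpair : E.P t ω {η | η 0 = true ∧ η 1 = true} ≤ ENNReal.ofReal (t ^ 2) := by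
    rw [← ofReal_measureReal, ← expect_occupied_pair_eq_real]
    exact ENNReal.ofReal_le_ofReal (E.expect_occupied_pair_le (mem_LO₀_iff.1 hω).1 ht)
  have hleft : E.P t ω (⋃ k : ℕ, {η | η (-(k + 2 : ℤ)) = false}) ≤
      ENNReal.ofReal (t ^ 2 * Real.exp 1) := by
    have hsum := hasSum_one_div_factorial.mul_left (t ^ 2)
    rw [← hsum.tsum_eq, ENNReal.ofReal_tsum_of_nonneg (fun k => by positivity) hsum.summable]
    exact (measure_iUnion_le _).trans
      (ENNReal.tsum_le_tsum fun k => E.measure_empty_left_le hω ht ht₁ k)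
  rw [mul_add, mul_one, ENNReal.ofReal_add (by positivity) (by positivity)]
  exact (measure_union_le _ _).trans (add_le_add hpair hleft)

/-- `ν` is an invariant law of the process seen from the front. -/
structure IsFrontInvariant (ν : Measure Config) : Prop where
  isProbabilityMeasure : IsProbabilityMeasure ν
  measure_LO₀ : ν LO₀ = 1
  Qt_eq : ∀ t : ℝ, 0 ≤ t → Qt E t ν = ν

namespace IsFrontInvariant

variable {E} {ν : Measure Config} {u : Config → ℝ} {n : ℤ}

lemma ae_mem_LO₀ (I : E.IsFrontInvariant ν) : ∀ᵐ ω ∂ν, ω ∈ LO₀ :=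
  have := I.isProbabilityMeasure
  (mem_ae_iff_prob_eq_one measurableSet_LO₀).2 I.measure_LO₀

lemma aemeasurable_θL (I : E.IsFrontInvariant ν) (ht : 0 ≤ t) :
    AEMeasurable (θL 0) (ν.bind (E.P t)) := by
  by_contra h
  have hzero := I.Qt_eq t ht
  rw [Qt, Measure.map_of_not_aemeasurable h] at hzero
  simpa [← hzero] using I.measure_LO₀

lemma integral_fromFront (I : E.IsFrontInvariant ν) (hu : IsCylinder u) (ht : 0 ≤ t) :
    ∫ ω, fromFront u ω ∂ν = ∫ η, u (θL 0 η) ∂(ν.bind (E.P t)) := by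
  have hmap : (ν.bind (E.P t)).map (θL 0) = ν := I.Qt_eq t ht
  rw [← integral_map (I.aemeasurable_θL ht) hu.continuous.measurable.aestronglyMeasurable, hmap]
  exact integral_congr_ae (I.ae_mem_LO₀.mono fun ω hω => fromFront_of_mem_LO₀ u hω)

lemma measureReal_bind_farFront_le (I : E.IsFrontInvariant ν) (ht : 0 ≤ t) (ht₁ : t ≤ 1) :
    (ν.bind (E.P t)).real farFront ≤ t ^ 2 * (1 + Real.exp 1) := by
  have := I.isProbabilityMeasure
  refine ENNReal.toReal_le_of_le_ofReal (by positivity) ?_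
  rw [Measure.bind_apply measurableSet_farFront (Kernel.aemeasurable _)]
  refine (lintegral_mono_ae (I.ae_mem_LO₀.mono fun ω hω =>
    E.measure_farFront_le hω ht ht₁)).trans_eq ?_
  simp

lemma exists_abs_integral_increment_le (I : E.IsFrontInvariant ν) (hn : 0 ≤ n)
    (hu : DependsOnF u ↑(Finset.Icc 1 n)) :
    ∃ C, ∀ t, 0 < t → t ≤ 1 →
      |∫ ω, (expect E.P t (fromFront u) ω - fromFront u ω) / t ∂ν| ≤ C * t := by
  have := I.isProbabilityMeasure
  have huc : Continuous u := IsCylinder.continuous ⟨_, hu⟩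
  have hFc : Continuous (fromFront u) := IsCylinder.continuous ⟨_, dependsOnF_fromFront hn hu⟩
  obtain ⟨b, hb⟩ := exists_abs_le_of_continuous huc
  obtain ⟨b', hb'⟩ := exists_abs_le_of_continuous hFc
  have hb₀ : 0 ≤ b + b' := add_nonneg ((abs_nonneg _).trans (hb default))
    ((abs_nonneg _).trans (hb' default))
  refine ⟨(1 + Real.exp 1) * (b + b'), fun t ht ht₁ => ?_⟩
  have hθ : Integrable (fun η => u (θL 0 η)) (ν.bind (E.P t)) :=
    .of_bound (huc.measurable.comp_aemeasurable (I.aemeasurable_θL ht.le)).aestronglyMeasurable b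
      (ae_of_all _ fun η => hb _)
  have hF := integrable_of_continuous hFc (ν.bind (E.P t))
  have hPF : Integrable (expect E.P t (fromFront u)) ν :=
    integrable_of_continuous (E.feller t ht.le _ hFc) ν
  have hpoint (η : Config) :
      |fromFront u η - u (θL 0 η)| ≤ farFront.indicator (fun _ => b + b') η := by
    by_cases hη : η ∈ farFront
    · rw [Set.indicator_of_mem hη, add_comm]
      exact (abs_sub _ _).trans (add_le_add (hb' η) (hb _))
    · simp [hη, apply_θL_eq_fromFront hu hη]
  rw [integral_div, abs_div, abs_of_pos ht, div_le_iff₀ ht,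
    integral_sub hPF (integrable_of_continuous hFc _), I.integral_fromFront ⟨_, hu⟩ ht.le,
    integral_expect t hFc, ← integral_sub hF hθ]
  calc |∫ η, (fromFront u η - u (θL 0 η)) ∂(ν.bind (E.P t))|
      ≤ ∫ η, farFront.indicator (fun _ => b + b') η ∂(ν.bind (E.P t)) :=
        abs_integral_le_integral_abs.trans (integral_mono (hF.sub hθ).abs
          ((integrable_const _).indicator measurableSet_farFront) hpoint)
    _ = (ν.bind (E.P t)).real farFront * (b + b') := by
        rw [integral_indicator_const _ measurableSet_farFront, smul_eq_mul]
    _ ≤ t ^ 2 * (1 + Real.exp 1) * (b + b') := by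
        gcongr
        exact I.measureReal_bind_farFront_le ht.le ht₁
    _ = (1 + Real.exp 1) * (b + b') * t * t := by ring

lemma integral_eastGen_fromFront (I : E.IsFrontInvariant ν) (hn : 0 ≤ n)
    (hu : DependsOnF u ↑(Finset.Icc 1 n)) : ∫ ω, eastGen E.p (fromFront u) ω ∂ν = 0 := by
  have := I.isProbabilityMeasure
  have hF : IsCylinder (fromFront u) := ⟨_, dependsOnF_fromFront hn hu⟩
  obtain ⟨C, hC⟩ := I.exists_abs_integral_increment_le hn hu
  have hlin : Tendsto (fun t : ℝ => C * t) (𝓝[>] 0) (𝓝 0) := by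
    simpa using (continuous_const_mul C).tendsto 0 |>.mono_left nhdsWithin_le_nhds
  refine tendsto_nhds_unique (E.isFellerSemigroup.tendsto_integral_expect_sub_div hF.continuous
    (isCylinder_eastGen E.p hF).continuous (E.hasGenerator_eastGen hF) ν)
    (squeeze_zero_norm' ?_ hlin)
  filter_upwards [Ioo_mem_nhdsGT one_pos] with t ht using hC t ht.1 ht.2.le

/-- The generator of the process seen from the front has mean zero: the bulk flips, the front
jumping to `-1`, and the front jumping to `1`. -/
theorem integral_generator_eq_zero (I : E.IsFrontInvariant ν) (hn : 0 ≤ n)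
    (hu : DependsOnF u ↑(Finset.Icc 1 n)) :
    ∑ x ∈ Finset.Icc 1 n,
        ∫ ω, emptyAt (x + 1) ω * flipRate E.p x ω * (u (flipAt ω x) - u ω) ∂ν +
      ∫ ω, (1 - E.p) * (u (shift (-1) ω) - u ω) ∂ν +
      ∫ ω, emptyAt 1 ω * E.p * (u (shift 1 ω) - u ω) ∂ν = 0 := by
  have := I.isProbabilityMeasure
  have huc : Continuous u := IsCylinder.continuous ⟨_, hu⟩
  rw [← integral_finsetSum _ fun x _ => integrable_of_continuous (by fun_prop) ν,
    ← integral_add (integrable_of_continuous (by fun_prop) ν)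
      (integrable_of_continuous (by fun_prop) ν),
    ← integral_add (integrable_of_continuous (by fun_prop) ν)
      (integrable_of_continuous (by fun_prop) ν), ← I.integral_eastGen_fromFront hn hu]
  exact integral_congr_ae (I.ae_mem_LO₀.mono fun ω hω => (eastGen_fromFront E.p hn hu hω).symm)

end IsFrontInvariant

end EastProcess

/-! ### Infinitely many zeros -/

namespace East

lemma emptyAt_eq_zero_iff {x : ℤ} {ω : Config} : emptyAt x ω = 0 ↔ ω x = true := by
  simp [emptyAt]

lemma ae_eq_zero_of_integral_nonpos {X : Type*} [TopologicalSpace X] [CompactSpace X]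
    [MeasurableSpace X] [OpensMeasurableSpace X] {m : Measure X} [IsFiniteMeasure m] {f : X → ℝ}
    (hf : Continuous f) (hf₀ : ∀ x, 0 ≤ f x) (h : ∫ x, f x ∂m ≤ 0) : ∀ᵐ x ∂m, f x = 0 :=
  (integral_eq_zero_iff_of_nonneg hf₀ (integrable_of_continuous hf m)).1
    (h.antisymm (integral_nonneg hf₀))

/-- The configurations with a right-most zero, located at `M`. -/
def lastZeroAt (M : ℤ) : Set Config := {ω | ω M = false ∧ ∀ x, M < x → ω x = true}

lemma measurableSet_lastZeroAt (M : ℤ) : MeasurableSet (lastZeroAt M) := by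
  have h : lastZeroAt M = {ω : Config | ω M = false} ∩ ⋂ x : ℤ, ⋂ _ : M < x, {ω | ω x = true} := by
    ext ω
    simp [lastZeroAt]
  rw [h]
  exact (measurableSet_eval_eq _ _).inter
    (.iInter fun x => .iInter fun _ => measurableSet_eval_eq _ _)

lemma pairwise_disjoint_lastZeroAt : Pairwise (Function.onFun Disjoint lastZeroAt) :=
  pairwise_disjoint_on _ |>.2 fun a b hab =>
    Set.disjoint_left.2 fun ω ha hb => by simpa [hb.1] using ha.2 b hab

lemma shift_mem_lastZeroAt_iff {y M : ℤ} {ω : Config} :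
    shift y ω ∈ lastZeroAt M ↔ ω ∈ lastZeroAt (M + y) :=
  and_congr_right fun _ =>
    ⟨fun h x hx => by simpa [shift] using h (x - y) (by lia), fun h x hx => h (x + y) (by lia)⟩

lemma shift_shift (a b : ℤ) (ω : Config) : shift a (shift b ω) = shift (a + b) ω := by
  funext x; simp only [shift, add_assoc]

/-- The event that `A` occurs for the configuration seen from its right-most zero. -/
def seenFromLastZero (A : Set Config) : Set Config := ⋃ M : ℤ, lastZeroAt M ∩ shift M ⁻¹' A

lemma measurableSet_lastZeroAt_inter {A : Set Config} (hA : MeasurableSet A) (M : ℤ) :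
    MeasurableSet (lastZeroAt M ∩ shift M ⁻¹' A) :=
  (measurableSet_lastZeroAt M).inter ((continuous_shift M).measurable hA)

lemma measurableSet_seenFromLastZero {A : Set Config} (hA : MeasurableSet A) :
    MeasurableSet (seenFromLastZero A) :=
  .iUnion (measurableSet_lastZeroAt_inter hA)

lemma shift_mem_seenFromLastZero_iff {A : Set Config} {y : ℤ} {ω : Config} :
    shift y ω ∈ seenFromLastZero A ↔ ω ∈ seenFromLastZero A := by
  simp only [seenFromLastZero, Set.mem_iUnion, Set.mem_inter_iff, Set.mem_preimage,
    shift_mem_lastZeroAt_iff, shift_shift]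
  exact ((Equiv.addRight y).surjective.exists
    (p := fun M => ω ∈ lastZeroAt M ∧ shift M ω ∈ A)).symm

/-- The law of the configuration seen from its right-most zero, restricted to the event that there
is one. -/
def lastZeroLaw (ν : Measure Config) : Measure Config :=
  Measure.sum fun M : ℤ => (ν.restrict (lastZeroAt M)).map (shift M)

lemma lastZeroLaw_apply (ν : Measure Config) {A : Set Config} (hA : MeasurableSet A) :
    lastZeroLaw ν A = ν (seenFromLastZero A) := by
  rw [lastZeroLaw, seenFromLastZero, Measure.sum_apply _ hA,
    measure_iUnion (fun a b hab => (pairwise_disjoint_lastZeroAt hab).mono Set.inter_subset_left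
      Set.inter_subset_left) (measurableSet_lastZeroAt_inter hA)]
  refine tsum_congr fun M => ?_
  have hM := (continuous_shift M).measurable
  rw [Measure.map_apply hM hA, Measure.restrict_apply (hM hA), Set.inter_comm]

instance (ν : Measure Config) [IsFiniteMeasure ν] : IsFiniteMeasure (lastZeroLaw ν) :=
  ⟨by rw [lastZeroLaw_apply _ .univ]; exact measure_lt_top _ _⟩

lemma θL_zero_eq_shift {η : Config} (hη : η ∈ LO) : θL 0 η = shift (front η) η := by
  obtain ⟨hfront, hlt⟩ := apply_front_eq_false_and_lt hη
  funext x
  unfold θL shift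
  split_ifs with hneg hzero
  · exact (hlt _ (by lia)).symm
  · rw [hzero, zero_add, hfront]
  · congr 1
    ring

lemma measurableSet_LO : MeasurableSet LO := by
  have h : LO = (⋃ y : ℤ, ⋂ x : ℤ, ⋂ _ : x < y, {η : Config | η x = true}) ∩
      ⋃ x : ℤ, {η | η x = false} := by
    ext η
    simp [LO]
  rw [h]
  exact .inter (.iUnion fun y => .iInter fun x => .iInter fun _ => measurableSet_eval_eq _ _)
    (.iUnion fun x => measurableSet_eval_eq _ _)

end East

namespace EastProcess

variable (E : EastProcess) {ω : Config} {t : ℝ} {M : ℤ}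

lemma expect_emptyAt_nonpos {x : ℤ} (hω : ∀ y, x ≤ y → ω y = true) (ht : 0 ≤ t) :
    expect E.P t (emptyAt x) ω ≤ 0 :=
  ge_of_tendsto (FloorSemiring.tendsto_pow_div_factorial_atTop t)
    (.of_forall fun k => E.expect_emptyAt_le k (fun i _ => hω _ (by lia)) ht)

lemma ae_mem_lastZeroAt (hω : ω ∈ lastZeroAt M) (ht : 0 ≤ t) :
    ∀ᵐ η ∂(E.P t ω), η ∈ lastZeroAt M := by
  have hright (x : ℤ) : ∀ᵐ η ∂(E.P t ω), M < x → η x = true := by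
    by_cases hx : M < x
    · filter_upwards [ae_eq_zero_of_integral_nonpos (continuous_emptyAt x) (emptyAt_nonneg x)
        (E.expect_emptyAt_nonpos (fun y hy => hω.2 y (hx.trans_le hy)) ht)] with η hη _
      exact emptyAt_eq_zero_iff.1 hη
    · exact ae_of_all _ fun η h => absurd h hx
  have hzero : expect E.P t (fun η => 1 - emptyAt M η) ω ≤ 0 := by
    have h := E.expect_le_of_eastGen_le (by fun_prop) (continuous_emptyAt _)
      (E.eastGen_one_sub_emptyAt_le M) (continuous_const (y := (0 : ℝ))) ht
      fun s hs => E.expect_emptyAt_nonpos (fun y hy => hω.2 y (by lia)) hs.1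
    simpa [emptyAt, hω.1] using h
  filter_upwards [ae_all_iff.2 hright, ae_eq_zero_of_integral_nonpos (by fun_prop)
    (fun η => sub_nonneg.2 (emptyAt_le_one M η)) hzero] with η hη hηM
  refine ⟨?_, hη⟩
  contrapose! hηM
  simp [emptyAt, hηM]

lemma apply_shift_le_apply_seenFromLastZero (hω : ω ∈ lastZeroAt M) (ht : 0 ≤ t) {A : Set Config}
    (hA : MeasurableSet A) : E.P t (shift M ω) A ≤ E.P t ω (seenFromLastZero A) := by
  rw [E.shiftComm t ht M ω, Measure.map_apply (continuous_shift M).measurable hA]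
  refine measure_mono_ae ?_
  filter_upwards [E.ae_mem_lastZeroAt hω ht] with η hη hηA
  exact Set.mem_iUnion.2 ⟨M, hη, hηA⟩

lemma bind_lastZeroLaw_le (ν : Measure Config) (ht : 0 ≤ t) {A : Set Config}
    (hA : MeasurableSet A) :
    (lastZeroLaw ν).bind (E.P t) A ≤ ν.bind (E.P t) (seenFromLastZero A) := by
  rw [Measure.bind_apply hA (Kernel.aemeasurable _),
    Measure.bind_apply (measurableSet_seenFromLastZero hA) (Kernel.aemeasurable _)]
  calc ∫⁻ ω, E.P t ω A ∂(lastZeroLaw ν)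
      = ∑' M : ℤ, ∫⁻ ω in lastZeroAt M, E.P t (shift M ω) A ∂ν := by
        rw [lastZeroLaw, lintegral_sum_measure]
        exact tsum_congr fun M =>
          lintegral_map ((E.P t).measurable_coe hA) (continuous_shift M).measurable
    _ ≤ ∑' M : ℤ, ∫⁻ ω in lastZeroAt M, E.P t ω (seenFromLastZero A) ∂ν :=
        ENNReal.tsum_le_tsum fun M => setLIntegral_mono' (measurableSet_lastZeroAt M)
          fun ω hω => E.apply_shift_le_apply_seenFromLastZero hω ht hA
    _ = ∫⁻ ω in ⋃ M, lastZeroAt M, E.P t ω (seenFromLastZero A) ∂ν := by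
        rw [lintegral_iUnion measurableSet_lastZeroAt pairwise_disjoint_lastZeroAt]
    _ ≤ ∫⁻ ω, E.P t ω (seenFromLastZero A) ∂ν := setLIntegral_le_lintegral _ _

-- The constraint imposed by a frozen zero at the origin is a function of the window alone.
lemma dependsOnF_frozen_flip {h : Config → ℝ} {p : ℝ} {n x : ℤ}
    (hdep : DependsOnF h ↑(Finset.Icc (-n) (-1))) (hx : x ∈ Finset.Icc (-n) (-1)) :
    DependsOnF (fun ω => emptyAt (x + 1) (Function.update ω 0 false) * flipRate p x ω *
      (h (flipAt ω x) - h ω)) ↑(Finset.Icc (-n) (-1)) := by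
  intro ω ω' hω
  have hupdate : emptyAt (x + 1) (Function.update ω 0 false) =
      emptyAt (x + 1) (Function.update ω' 0 false) := by
    refine dependsOnF_emptyAt _ _ _ fun y hy => ?_
    obtain rfl : y = x + 1 := hy
    by_cases hx₀ : x + 1 = 0
    · simp [hx₀]
    · simp only [Function.update_of_ne hx₀]
      exact hω _ (by simp only [Finset.coe_Icc, Set.mem_Icc, Finset.mem_Icc] at hx ⊢; lia)
  have hflip : h (flipAt ω x) = h (flipAt ω' x) := hdep _ _ fun y hy => by
    simp only [flipAt, hω y hy, hω x hx]
  simp only [hupdate, hflip, hdep ω ω' hω, flipRate, hω x hx]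

section ZeroBoundary

variable {π : Measure Config} [IsFiniteMeasure π] {n : ℤ} (h₀ : ∀ᵐ ω ∂π, ω 0 = false)
include h₀

lemma integral_eastGen_localDensity :
    ∫ ω, eastGen E.p (localDensity (Finset.Icc (-n) (-1)) π E.μ) ω ∂π =
      -(1 / 2) * ∑ x ∈ Finset.Icc (-n) (-1),
        ∫ ω, emptyAt (x + 1) (Function.update ω 0 false) *
          sqGrad E.p (localDensity (Finset.Icc (-n) (-1)) π E.μ) x ω ∂E.μ := by
  set W : Finset ℤ := Finset.Icc (-n) (-1)
  set h := localDensity W π E.μ with hh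
  have hdep : DependsOnF h ↑W := dependsOnF_localDensity W π E.μ
  have hc : Continuous h := IsCylinder.continuous ⟨W, hdep⟩
  have hconstraint (x : ℤ) :
      Continuous fun ω : Config => emptyAt (x + 1) (Function.update ω 0 false) :=
    (continuous_emptyAt _).comp (continuous_id.update 0 continuous_const)
  have hsum : ∫ ω, eastGen E.p h ω ∂π = ∑ x ∈ W, ∫ ω,
      emptyAt (x + 1) (Function.update ω 0 false) * flipRate E.p x ω *
        (h (flipAt ω x) - h ω) ∂π := by
    rw [← integral_finsetSum _ fun x _ => integrable_of_continuous (by fun_prop) π]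
    refine integral_congr_ae (h₀.mono fun ω hω => ?_)
    simp only [← hω, Function.update_eq_self, eastGen_eq_sum E.p hdep]
  rw [hsum, Finset.mul_sum]
  refine Finset.sum_congr rfl fun x hx => ?_
  rw [← integral_localDensity_mul (dependsOnF_frozen_flip hdep hx) π E.μ
    (E.real_cylinderAt_pos W), ← hh, E.integral_mul_flip_eq x (hconstraint x) (fun ω => ?_) hc hc]
  · simp only [sqGrad, pow_two, mul_assoc]
  · refine dependsOnF_emptyAt _ _ _ fun y hy => ?_
    obtain rfl : y = x + 1 := hy
    simp [Function.update_apply, flipAt]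

lemma integral_of_integral_eastGen_eq_zero (hgap : 0 < gap E)
    (hinv : ∀ v, IsCylinder v → ∫ ω, eastGen E.p v ω ∂π = 0)
    {φ : Config → ℝ} (hφ : DependsOnF φ ↑(Finset.Icc (-n) (-1))) :
    ∫ ω, φ ω ∂π = π.real Set.univ * ∫ ω, φ ω ∂E.μ := by
  set W : Finset ℤ := Finset.Icc (-n) (-1)
  set h := localDensity W π E.μ with hh
  have hdep : DependsOnF h ↑W := dependsOnF_localDensity W π E.μ
  have hc : Continuous h := IsCylinder.continuous ⟨W, hdep⟩
  have hform : ∑ x ∈ W, ∫ ω, emptyAt (x + 1) ω * sqGrad E.p h x ω ∂E.μ ≤ 0 := by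
    have hzero := (E.integral_eastGen_localDensity h₀ (n := n)).symm.trans (hinv h ⟨W, hdep⟩)
    rw [mul_eq_zero_iff_left (by norm_num)] at hzero
    refine (Finset.sum_le_sum fun x _ => integral_mono
      (integrable_of_continuous ?_ _) (integrable_of_continuous ?_ _)
      fun ω => mul_le_mul_of_nonneg_right ?_ (E.sqGrad_nonneg h x ω)).trans_eq hzero
    · exact (continuous_emptyAt _).mul (continuous_sqGrad _ hc x)
    · exact ((continuous_emptyAt _).comp (continuous_id.update 0 continuous_const)).mul
        (continuous_sqGrad _ hc x)
    · by_cases hx : x + 1 = 0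
      · simpa [emptyAt, hx] using emptyAt_le_one _ _
      · simp [emptyAt, Function.update_of_ne hx]
  have hvar : variance h E.μ ≤ 0 := by
    have := E.gap_mul_variance_le hdep
    exact nonpos_of_mul_nonpos_right (by linarith) hgap
  rw [variance_eq_integral hc.measurable.aemeasurable] at hvar
  have hmean : ∫ ω, h ω ∂E.μ = π.real Set.univ := by
    simpa [hh] using integral_localDensity_mul (W := W) (φ := fun _ => (1 : ℝ)) (fun _ _ _ => rfl)
      π E.μ (E.real_cylinderAt_pos W)
  rw [← integral_localDensity_mul hφ π E.μ (E.real_cylinderAt_pos W), ← hh, ← hmean,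
    ← integral_const_mul]
  refine integral_congr_ae ?_
  filter_upwards [ae_eq_zero_of_integral_nonpos (by fun_prop) (fun _ => sq_nonneg _) hvar]
    with ω hω
  rw [sub_eq_zero.1 (pow_eq_zero_iff two_ne_zero |>.1 hω)]

end ZeroBoundary

namespace IsFrontInvariant

variable {E} {ν : Measure Config}

lemma ae_bind_mem_LO (I : E.IsFrontInvariant ν) (ht : 0 ≤ t) : ∀ᵐ η ∂(ν.bind (E.P t)), η ∈ LO :=
  (Measure.ae_comp_iff measurableSet_LO).2 <| I.ae_mem_LO₀.mono fun ω hω =>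
    have := E.markov t
    (mem_ae_iff_prob_eq_one measurableSet_LO).2 (E.loStable t ht ω hω.1)

lemma lastZeroLaw_bind_le (I : E.IsFrontInvariant ν) (ht : 0 ≤ t) :
    (lastZeroLaw ν).bind (E.P t) ≤ lastZeroLaw ν := by
  refine Measure.le_iff.2 fun A hA => ?_
  have hmap : (ν.bind (E.P t)).map (θL 0) = ν := I.Qt_eq t ht
  calc (lastZeroLaw ν).bind (E.P t) A
      ≤ ν.bind (E.P t) (seenFromLastZero A) := E.bind_lastZeroLaw_le ν ht hA
    _ ≤ ν.bind (E.P t) (θL 0 ⁻¹' seenFromLastZero A) := by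
        refine measure_mono_ae ((I.ae_bind_mem_LO ht).mono fun η hη hηA => ?_)
        change θL 0 η ∈ _
        rw [θL_zero_eq_shift hη]
        exact shift_mem_seenFromLastZero_iff.2 hηA
    _ = lastZeroLaw ν A := by
        rw [← Measure.map_apply_of_aemeasurable (I.aemeasurable_θL ht)
          (measurableSet_seenFromLastZero hA), hmap, lastZeroLaw_apply ν hA]

lemma lastZeroLaw_bind_eq (I : E.IsFrontInvariant ν) (ht : 0 ≤ t) :
    (lastZeroLaw ν).bind (E.P t) = lastZeroLaw ν := by
  have := I.isProbabilityMeasure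
  refine Measure.eq_of_le_of_measure_univ_eq (I.lastZeroLaw_bind_le ht) ?_
  rw [Measure.bind_apply .univ (Kernel.aemeasurable _)]
  simp

lemma integral_eastGen_lastZeroLaw (I : E.IsFrontInvariant ν) {v : Config → ℝ}
    (hv : IsCylinder v) : ∫ ω, eastGen E.p v ω ∂(lastZeroLaw ν) = 0 :=
  have := I.isProbabilityMeasure
  E.isFellerSemigroup.integral_generator_eq_zero hv.continuous
    (isCylinder_eastGen E.p hv).continuous (E.hasGenerator_eastGen hv)
    fun _ => I.lastZeroLaw_bind_eq

lemma ae_lastZeroLaw (I : E.IsFrontInvariant ν) :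
    ∀ᵐ ω ∂(lastZeroLaw ν), ω 0 = false ∧ ω ∈ LO := by
  have hmeas : MeasurableSet {ω : Config | ω 0 = false ∧ ω ∈ LO} :=
    (measurableSet_eval_eq 0 false).inter measurableSet_LO
  refine (Measure.ae_sum_iff' hmeas).2 fun M => ?_
  rw [ae_map_iff (continuous_shift M).measurable.aemeasurable hmeas,
    ae_restrict_iff' (measurableSet_lastZeroAt M)]
  filter_upwards [I.ae_mem_LO₀] with ω hω hM
  have hzero : shift M ω 0 = false := by simpa [shift] using hM.1
  exact ⟨hzero, ⟨-M, fun x hx => (mem_LO₀_iff.1 hω).2 _ (by lia)⟩, 0, hzero⟩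

/-- Seen from its right-most zero, the configuration is Bernoulli to the left; but it is occupied
far to the left. -/
lemma lastZeroLaw_eq_zero (hgap : 0 < gap E) (I : E.IsFrontInvariant ν) : lastZeroLaw ν = 0 := by
  have := I.isProbabilityMeasure
  have hlim : Tendsto (fun n : ℕ => ∫ ω, emptyAt (-(n + 1 : ℤ)) ω ∂(lastZeroLaw ν)) atTop
      (𝓝 (∫ _, (0 : ℝ) ∂(lastZeroLaw ν))) := by
    refine tendsto_integral_of_dominated_convergence (fun _ => 1)
      (fun n => (continuous_emptyAt _).measurable.aestronglyMeasurable) (integrable_const _)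
      (fun n => ae_of_all _ fun ω => ?_) ?_
    · simpa [abs_of_nonneg (emptyAt_nonneg _ ω)] using emptyAt_le_one _ ω
    · filter_upwards [I.ae_lastZeroLaw] with ω hω
      obtain ⟨y, hy⟩ := hω.2.1
      refine tendsto_const_nhds.congr' ?_
      filter_upwards [eventually_ge_atTop (-y).toNat] with n hn
      exact (emptyAt_eq_zero_iff.2 (hy _ (by lia))).symm
  have hconst (n : ℕ) : ∫ ω, emptyAt (-(n + 1 : ℤ)) ω ∂(lastZeroLaw ν) =
      (lastZeroLaw ν).real Set.univ * (1 - E.p) := by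
    rw [E.integral_of_integral_eastGen_eq_zero (I.ae_lastZeroLaw.mono fun _ h => h.1) hgap
      (fun _ => I.integral_eastGen_lastZeroLaw) (n := n + 1)
      ((dependsOnF_emptyAt _).mono (by simp))]
    exact congrArg _ (by
      simpa [emptyAt] using E.integral_comp_eval (-(n + 1 : ℤ)) fun b => if b = false then 1 else 0)
  simp only [hconst, integral_zero, tendsto_const_nhds_iff] at hlim
  rwa [mul_eq_zero_iff_right (sub_pos.2 E.hp1).ne', measureReal_eq_zero_iff,
    Measure.measure_univ_eq_zero] at hlim

lemma measure_lastZeroAt (hgap : 0 < gap E) (I : E.IsFrontInvariant ν) (M : ℤ) :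
    ν (lastZeroAt M) = 0 := by
  have hsub : lastZeroAt M ⊆ seenFromLastZero .univ :=
    fun ω hω => Set.mem_iUnion.2 ⟨M, hω, Set.mem_univ _⟩
  refine measure_mono_null hsub ?_
  rw [← lastZeroLaw_apply ν .univ, I.lastZeroLaw_eq_zero hgap, Measure.coe_zero, Pi.zero_apply]

lemma ae_exists_empty_ge (hgap : 0 < gap E) (I : E.IsFrontInvariant ν) (M : ℤ) :
    ∀ᵐ ω ∂ν, ∃ x, M ≤ x ∧ ω x = false := by
  filter_upwards [I.ae_mem_LO₀, ae_all_iff.2 fun k : ℤ =>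
    measure_eq_zero_iff_ae_notMem.1 (I.measure_lastZeroAt hgap k)] with ω hω hlast
  by_contra! hall
  obtain ⟨k, hk, hmax⟩ := Int.exists_greatest_of_bdd (P := fun z => ω z = false)
    ⟨M, fun z hz => not_lt.1 fun hMz => hall z hMz.le hz⟩ ⟨0, (mem_LO₀_iff.1 hω).1⟩
  exact hlast k ⟨hk, fun x hx => Bool.eq_true_of_not_eq_false fun hx' => hx.not_ge (hmax x hx')⟩

theorem tendsto_measureReal_occupied (hgap : 0 < gap E) (I : E.IsFrontInvariant ν) (M : ℤ) :
    Tendsto (fun n : ℕ => ν.real (cylinderAt (Finset.Icc M n) fun _ => true)) atTop (𝓝 0) := by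
  have := I.isProbabilityMeasure
  have hinter : ν (⋂ n : ℕ, cylinderAt (Finset.Icc M n) fun _ => true) = 0 := by
    refine measure_eq_zero_iff_ae_notMem.2 ((I.ae_exists_empty_ge hgap M).mono ?_)
    rintro ω ⟨x, hMx, hx⟩ hω
    simpa [hx] using Set.mem_iInter.1 hω x.toNat x (Finset.mem_Icc.2 ⟨hMx, x.self_le_toNat⟩)
  have hanti : Antitone fun n : ℕ => cylinderAt (Finset.Icc M n) fun _ => true :=
    fun a b hab ω hω x hx => hω x (Finset.Icc_subset_Icc_right (Nat.cast_le.2 hab) hx)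
  have hlim := tendsto_measure_iInter_atTop (μ := ν)
    (fun n => (measurableSet_cylinderAt _ _).nullMeasurableSet) hanti ⟨0, measure_ne_top _ _⟩
  rw [hinter] at hlim
  exact (ENNReal.tendsto_toReal ENNReal.zero_ne_top).comp hlim

end IsFrontInvariant

end EastProcess

/-! ### Entropy production -/

namespace DependsOnF

lemma comp_flipAt {f : Config → ℝ} {S : Set ℤ} (h : DependsOnF f S) {x : ℤ} (hx : x ∈ S) :
    DependsOnF (fun ω => f (flipAt ω x)) S :=
  fun ω ω' hω => h _ _ fun y hy => by simp only [flipAt, hω y hy, hω x hx]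

end DependsOnF

namespace East

lemma cylinderAt_insert_update {W : Finset ℤ} {x : ℤ} (hx : x ∉ W) (ω : Config) (b : Bool) :
    cylinderAt (insert x W) (Function.update ω x b) = cylinderAt W ω ∩ {η | η x = b} := by
  have hW : ∀ y ∈ W, Function.update ω x b y = ω y :=
    fun y hy => Function.update_of_ne (ne_of_mem_of_not_mem hy hx) _ _
  rw [← cylinderAt_congr hW]
  ext η
  simp [cylinderAt, and_comm]

lemma real_cylinderAt_eq_add (m : Measure Config) [IsFiniteMeasure m] {W : Finset ℤ} {x : ℤ}
    (hx : x ∉ W) (ω : Config) :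
    m.real (cylinderAt W ω) = m.real (cylinderAt (insert x W) (Function.update ω x true)) +
      m.real (cylinderAt (insert x W) (Function.update ω x false)) := by
  have hcompl : cylinderAt W ω \ {η | η x = true} = cylinderAt W ω ∩ {η | η x = false} := by
    ext η
    simp
  rw [cylinderAt_insert_update hx, cylinderAt_insert_update hx,
    ← measureReal_inter_add_sdiff (s := cylinderAt W ω) (measurableSet_eval_eq x true), hcompl]

lemma two_mul_sq_sqrt_sub_sqrt_le {a b : ℝ} (ha : 0 < a) (hb : 0 < b) :
    2 * (√a - √b) ^ 2 ≤ (a - b) * (Real.log a - Real.log b) := by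
  wlog hab : b ≤ a generalizing a b with hsymm
  · linarith [hsymm hb ha (le_of_not_ge hab)]
  obtain ⟨s, hs, rfl⟩ : ∃ s, 0 < s ∧ s ^ 2 = a := ⟨√a, Real.sqrt_pos.2 ha, Real.sq_sqrt ha.le⟩
  obtain ⟨t, ht, rfl⟩ : ∃ t, 0 < t ∧ t ^ 2 = b := ⟨√b, Real.sqrt_pos.2 hb, Real.sq_sqrt hb.le⟩
  have hlog : 1 - (s / t)⁻¹ ≤ Real.log s - Real.log t := by
    rw [← Real.log_div hs.ne' ht.ne']
    exact Real.one_sub_inv_le_log_of_pos (by positivity)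
  rw [Real.sqrt_sq hs.le, Real.sqrt_sq ht.le, Real.log_pow, Real.log_pow]
  calc 2 * (s - t) ^ 2 ≤ 2 * (s - t) ^ 2 * ((s + t) / s) :=
        le_mul_of_one_le_right (by positivity) ((one_le_div hs).2 (by linarith))
    _ = (s ^ 2 - t ^ 2) * (2 * (1 - (s / t)⁻¹)) := by field_simp; ring
    _ ≤ (s ^ 2 - t ^ 2) * (2 * (Real.log s - Real.log t)) := by
        gcongr
    _ = (s ^ 2 - t ^ 2) * ((2 : ℕ) * Real.log s - (2 : ℕ) * Real.log t) := by push_cast; ring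

/-- The reverse triangle inequality in `ℓ²`, for the vectors `√f` and `√g`. -/
lemma sq_sqrt_sum_sub_sqrt_sum_le {ι : Type*} (s : Finset ι) {f g : ι → ℝ} (hf : ∀ i, 0 ≤ f i)
    (hg : ∀ i, 0 ≤ g i) :
    (√(∑ i ∈ s, f i) - √(∑ i ∈ s, g i)) ^ 2 ≤ ∑ i ∈ s, (√(f i) - √(g i)) ^ 2 := by
  simp only [sub_sq, Finset.sum_add_distrib, Finset.sum_sub_distrib, mul_assoc, ← Finset.mul_sum,
    Real.sq_sqrt (hf _), Real.sq_sqrt (hg _), Real.sq_sqrt (Finset.sum_nonneg fun i _ => hf i),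
    Real.sq_sqrt (Finset.sum_nonneg fun i _ => hg i)]
  gcongr
  exact Real.sum_sqrt_mul_sqrt_le s hf hg

end East

namespace EastProcess

variable (E : EastProcess) (ν : Measure Config)

/-- A lower bound for the equilibrium probabilities of the two states of a site. -/
def minProb : ℝ := min E.p (1 - E.p)

lemma minProb_pos : 0 < E.minProb := lt_min E.hp0 (sub_pos.2 E.hp1)

lemma minProb_le (b : Bool) : E.minProb ≤ E.siteProb b := by
  cases b <;> simp [minProb, siteProb]

lemma real_cylinderAt_insert {W : Finset ℤ} {x : ℤ} (hx : x ∉ W) (ω : Config) :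
    E.μ.real (cylinderAt (insert x W) ω) = E.siteProb (ω x) * E.μ.real (cylinderAt W ω) := by
  rw [real_cylinderAt, real_cylinderAt, Finset.prod_insert hx]

lemma localDensity_insert_le [IsFiniteMeasure ν] {W : Finset ℤ} {x : ℤ} (hx : x ∉ W)
    (ω : Config) :
    localDensity (insert x W) ν E.μ ω ≤ E.minProb⁻¹ * localDensity W ν E.μ ω := by
  have hsub : cylinderAt (insert x W) ω ⊆ cylinderAt W ω :=
    fun η hη y hy => hη y (Finset.mem_insert_of_mem hy)
  have hpos := E.real_cylinderAt_pos W ω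
  rw [localDensity, localDensity, E.real_cylinderAt_insert hx, inv_mul_eq_div, div_div, mul_comm]
  have := E.minProb_pos
  gcongr
  · finiteness
  · exact E.minProb_le _

lemma localDensity_eq_add [IsFiniteMeasure ν] {W : Finset ℤ} {x : ℤ} (hx : x ∉ W) (ω : Config) :
    localDensity W ν E.μ ω = ∑ b, E.siteProb b *
      localDensity (insert x W) ν E.μ (Function.update ω x b) := by
  have hW (b : Bool) : E.μ.real (cylinderAt W (Function.update ω x b)) =
      E.μ.real (cylinderAt W ω) :=
    congrArg _ (cylinderAt_congr fun y hy =>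
      Function.update_of_ne (ne_of_mem_of_not_mem hy hx) _ _)
  have hcancel (b : Bool) : E.siteProb b *
      localDensity (insert x W) ν E.μ (Function.update ω x b) =
        ν.real (cylinderAt (insert x W) (Function.update ω x b)) / E.μ.real (cylinderAt W ω) := by
    rw [localDensity, E.real_cylinderAt_insert hx, Function.update_self, hW, mul_div_assoc',
      mul_div_mul_left _ _ (E.siteProb_pos b).ne']
  rw [Finset.sum_congr rfl fun b _ => hcancel b, Fintype.sum_bool, ← add_div,
    ← real_cylinderAt_eq_add ν hx, localDensity]

/-- The density of `ν` with respect to `E.μ` on the window `[1, n]`. -/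
def windowDensity (n : ℤ) : Config → ℝ := localDensity (Finset.Icc 1 n) ν E.μ

/-- The window density, bounded away from zero so that its logarithm and the ratios of its values
are under control. -/
def regDensity (n : ℤ) (ω : Config) : ℝ := E.windowDensity ν n ω + 1

/-- The square root of the regularised window density, whose Dirichlet form bounds the entropy
production. -/
def rootDensity (n : ℤ) (ω : Config) : ℝ := √(E.regDensity ν n ω)

/-- The contribution of site `x` to twice the Dirichlet form of the root density. -/
def energy (n x : ℤ) : ℝ := ∫ ω, emptyAt (x + 1) ω * sqGrad E.p (E.rootDensity ν n) x ω ∂E.μ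

variable {n x : ℤ}

lemma windowDensity_nonneg (n : ℤ) (ω : Config) : 0 ≤ E.windowDensity ν n ω :=
  localDensity_nonneg _ _ _ _

lemma regDensity_pos (n : ℤ) (ω : Config) : 0 < E.regDensity ν n ω :=
  add_pos_of_nonneg_of_pos (E.windowDensity_nonneg ν n ω) one_pos

lemma dependsOnF_windowDensity (n : ℤ) : DependsOnF (E.windowDensity ν n) ↑(Finset.Icc 1 n) :=
  dependsOnF_localDensity _ _ _

lemma dependsOnF_regDensity (n : ℤ) : DependsOnF (E.regDensity ν n) ↑(Finset.Icc 1 n) :=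
  fun ω ω' h => congrArg (· + 1) (E.dependsOnF_windowDensity ν n ω ω' h)

@[fun_prop]
lemma continuous_windowDensity (n : ℤ) : Continuous (E.windowDensity ν n) :=
  IsCylinder.continuous ⟨_, E.dependsOnF_windowDensity ν n⟩

@[fun_prop]
lemma continuous_regDensity (n : ℤ) : Continuous (E.regDensity ν n) :=
  (E.continuous_windowDensity ν n).add continuous_const

@[fun_prop]
lemma continuous_rootDensity (n : ℤ) : Continuous (E.rootDensity ν n) :=
  (E.continuous_regDensity ν n).sqrt

lemma continuous_log_regDensity (n : ℤ) : Continuous fun ω => Real.log (E.regDensity ν n ω) :=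
  (E.continuous_regDensity ν n).log fun ω => (E.regDensity_pos ν n ω).ne'

lemma continuous_energy_integrand (n x : ℤ) :
    Continuous fun ω => emptyAt (x + 1) ω * sqGrad E.p (E.rootDensity ν n) x ω :=
  (continuous_emptyAt _).mul (continuous_sqGrad _ (E.continuous_rootDensity ν n) x)

section Finite

variable [IsFiniteMeasure ν]

lemma integral_windowDensity_mul {φ : Config → ℝ} (h : DependsOnF φ ↑(Finset.Icc 1 n)) :
    ∫ ω, E.windowDensity ν n ω * φ ω ∂E.μ = ∫ ω, φ ω ∂ν :=
  integral_localDensity_mul h ν E.μ (E.real_cylinderAt_pos _)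

lemma windowDensity_succ_le (hn : 0 ≤ n) (ω : Config) :
    E.windowDensity ν (n + 1) ω ≤ E.minProb⁻¹ * E.regDensity ν n ω := by
  rw [windowDensity, ← Finset.insert_Icc_right_eq_Icc_add_one (by lia)]
  refine (E.localDensity_insert_le ν (by simp) ω).trans ?_
  have := E.minProb_pos
  gcongr
  exact le_add_of_nonneg_right zero_le_one

/-- `log (G / F) ≤ G / F` for the regularised density `F`, which dominates the density itself. -/
lemma integral_mul_log_sub_log_le (hn : 0 ≤ n) {w G : Config → ℝ} (hw₀ : ∀ ω, 0 ≤ w ω)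
    (hw : DependsOnF w ↑(Finset.Icc 1 (n + 1))) (hG₀ : ∀ ω, 0 < G ω)
    (hG : DependsOnF G ↑(Finset.Icc 1 (n + 1))) :
    ∫ ω, w ω * (Real.log (G ω) - Real.log (E.regDensity ν n ω)) ∂ν ≤
      E.minProb⁻¹ * ∫ ω, w ω * G ω ∂E.μ := by
  set F := E.regDensity ν n
  have hF₀ : ∀ ω, 0 < F ω := E.regDensity_pos ν n
  have hF : DependsOnF F ↑(Finset.Icc 1 (n + 1)) := (E.dependsOnF_regDensity ν n).mono
    (Finset.coe_subset.2 (Finset.Icc_subset_Icc_right (by lia)))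
  have hlog : DependsOnF (fun ω => w ω * (Real.log (G ω) - Real.log (F ω)))
      ↑(Finset.Icc 1 (n + 1)) := fun ω ω' h => by simp only [hw _ _ h, hG _ _ h, hF _ _ h]
  have hdiv : DependsOnF (fun ω => w ω * (G ω / F ω)) ↑(Finset.Icc 1 (n + 1)) :=
    fun ω ω' h => by simp only [hw _ _ h, hG _ _ h, hF _ _ h]
  have hwG : DependsOnF (fun ω => w ω * G ω) ↑(Finset.Icc 1 (n + 1)) :=
    fun ω ω' h => by simp only [hw _ _ h, hG _ _ h]
  have hdivc : Continuous fun ω => w ω * (G ω / F ω) := IsCylinder.continuous ⟨_, hdiv⟩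
  have hwGc : Continuous fun ω => w ω * G ω := IsCylinder.continuous ⟨_, hwG⟩
  calc ∫ ω, w ω * (Real.log (G ω) - Real.log (F ω)) ∂ν
      ≤ ∫ ω, w ω * (G ω / F ω) ∂ν := by
        refine integral_mono (integrable_of_continuous (IsCylinder.continuous ⟨_, hlog⟩) _)
          (integrable_of_continuous hdivc _)
          fun ω => mul_le_mul_of_nonneg_left ?_ (hw₀ ω)
        rw [← Real.log_div (hG₀ ω).ne' (hF₀ ω).ne']
        exact Real.log_le_self (div_pos (hG₀ ω) (hF₀ ω)).le
    _ = ∫ ω, E.windowDensity ν (n + 1) ω * (w ω * (G ω / F ω)) ∂E.μ :=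
        (E.integral_windowDensity_mul ν hdiv).symm
    _ ≤ ∫ ω, E.minProb⁻¹ * (w ω * G ω) ∂E.μ := by
        refine integral_mono (integrable_of_continuous (by fun_prop) _)
          (integrable_of_continuous (by fun_prop) _) fun ω => ?_
        calc E.windowDensity ν (n + 1) ω * (w ω * (G ω / F ω))
            ≤ E.minProb⁻¹ * F ω * (w ω * (G ω / F ω)) :=
              mul_le_mul_of_nonneg_right (E.windowDensity_succ_le ν hn ω)
                (mul_nonneg (hw₀ ω) (div_pos (hG₀ ω) (hF₀ ω)).le)
          _ = E.minProb⁻¹ * (w ω * G ω) := by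
              field_simp [(hF₀ ω).ne']
    _ = E.minProb⁻¹ * ∫ ω, w ω * G ω ∂E.μ := integral_const_mul _ _

lemma integral_bulk_flip_log_le (hx : x ∈ Finset.Icc 1 (n - 1)) :
    ∫ ω, emptyAt (x + 1) ω * flipRate E.p x ω *
      (Real.log (E.regDensity ν n (flipAt ω x)) - Real.log (E.regDensity ν n ω)) ∂ν ≤
        -E.energy ν n x := by
  set u : Config → ℝ := fun ω => Real.log (E.regDensity ν n ω)
  have hu : DependsOnF u ↑(Finset.Icc 1 n) :=
    fun ω ω' h => congrArg Real.log (E.dependsOnF_regDensity ν n ω ω' h)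
  have huc : Continuous u := E.continuous_log_regDensity ν n
  rw [Finset.mem_Icc] at hx
  have hxn : x ∈ Finset.Icc 1 n := by rw [Finset.mem_Icc]; lia
  have hxn' : x + 1 ∈ Finset.Icc 1 n := by rw [Finset.mem_Icc]; lia
  have hlocal : DependsOnF (fun ω => emptyAt (x + 1) ω * flipRate E.p x ω * (u (flipAt ω x) - u ω))
      ↑(Finset.Icc 1 n) := fun ω ω' h => by
    simp only [emptyAt, flipRate, h _ hxn, h _ hxn', hu.comp_flipAt hxn ω ω' h, hu ω ω' h]
  rw [← E.integral_windowDensity_mul ν hlocal, E.integral_mul_flip_eq x (by fun_prop)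
    (fun ω => (dependsOnF_emptyAt _).flipAt_eq (by simp) ω) (by fun_prop) huc, energy,
    ← integral_const_mul, ← integral_neg]
  refine integral_mono (integrable_of_continuous (by fun_prop) _)
    (integrable_of_continuous (E.continuous_energy_integrand ν n x).neg _) fun ω => ?_
  have hentropy := mul_le_mul_of_nonneg_left (two_mul_sq_sqrt_sub_sqrt_le
    (E.regDensity_pos ν n (flipAt ω x)) (E.regDensity_pos ν n ω))
    (mul_nonneg (emptyAt_nonneg (x + 1) ω) (E.flipRate_nonneg x ω))
  simp only [regDensity, add_sub_add_right_eq_sub] at hentropy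
  simp only [sqGrad, rootDensity, regDensity, u]
  linarith

end Finite

section Probability

variable [IsProbabilityMeasure ν]

lemma integral_regDensity (n : ℤ) : ∫ ω, E.regDensity ν n ω ∂E.μ = 2 := by
  have hone := E.integral_windowDensity_mul ν (n := n) (φ := fun _ => 1) fun _ _ _ => rfl
  simp only [mul_one] at hone
  simp only [regDensity]
  rw [integral_add (integrable_of_continuous (by fun_prop) _) (integrable_const _), hone,
    integral_const, integral_const, probReal_univ, probReal_univ]
  norm_num

lemma integral_last_flip_log_le (hn : 1 ≤ n) :
    ∫ ω, emptyAt (n + 1) ω * flipRate E.p n ω *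
      (Real.log (E.regDensity ν n (flipAt ω n)) - Real.log (E.regDensity ν n ω)) ∂ν ≤
        E.minProb⁻¹ * 2 := by
  have hnn : n ∈ Finset.Icc 1 (n + 1) := by rw [Finset.mem_Icc]; lia
  have hnn' : n + 1 ∈ Finset.Icc 1 (n + 1) := by rw [Finset.mem_Icc]; lia
  refine (E.integral_mul_log_sub_log_le ν (by lia)
    (fun ω => mul_nonneg (emptyAt_nonneg _ ω) (E.flipRate_nonneg n ω))
    (fun ω ω' h => by simp only [emptyAt, flipRate, h _ hnn, h _ hnn'])
    (fun ω => E.regDensity_pos ν n _) (((E.dependsOnF_regDensity ν n).mono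
      (Finset.coe_subset.2 (Finset.Icc_subset_Icc_right (by lia)))).comp_flipAt hnn)).trans ?_
  refine mul_le_mul_of_nonneg_left ?_ (inv_nonneg.2 E.minProb_pos.le)
  calc ∫ ω, emptyAt (n + 1) ω * flipRate E.p n ω * E.regDensity ν n (flipAt ω n) ∂E.μ
      ≤ ∫ ω, flipRate E.p n ω * E.regDensity ν n (flipAt ω n) ∂E.μ :=
        integral_mono (integrable_of_continuous (by fun_prop) _)
          (integrable_of_continuous (by fun_prop) _) fun ω =>
            mul_le_mul_of_nonneg_right (mul_le_of_le_one_left (E.flipRate_nonneg n ω)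
              (emptyAt_le_one _ ω)) (E.regDensity_pos ν n _).le
    _ = ∫ ω, flipRate E.p n ω * E.regDensity ν n ω ∂E.μ :=
        E.integral_flipRate_mul_flipAt n (by fun_prop)
    _ ≤ ∫ ω, E.regDensity ν n ω ∂E.μ :=
        integral_mono (integrable_of_continuous (by fun_prop) _)
          (integrable_of_continuous (by fun_prop) _) fun ω =>
            mul_le_of_le_one_left (E.regDensity_pos ν n ω).le (E.flipRate_le_one n ω)
    _ = 2 := E.integral_regDensity ν n

lemma integral_shift_one_log_le (hn : 0 ≤ n) :
    ∫ ω, emptyAt 1 ω * E.p *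
      (Real.log (E.regDensity ν n (shift 1 ω)) - Real.log (E.regDensity ν n ω)) ∂ν ≤
        E.minProb⁻¹ * 2 := by
  have hone : (1 : ℤ) ∈ (↑(Finset.Icc 1 (n + 1)) : Set ℤ) := by
    rw [Finset.coe_Icc, Set.mem_Icc]; lia
  have hweight : DependsOnF (fun ω => emptyAt 1 ω * E.p) ↑(Finset.Icc 1 (n + 1)) :=
    fun ω ω' h => by simp only [emptyAt, h 1 hone]
  have hshift : DependsOnF (fun ω => E.regDensity ν n (shift 1 ω)) ↑(Finset.Icc 1 (n + 1)) :=
    fun ω ω' h => E.dependsOnF_regDensity ν n _ _ fun x hx => h _ (by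
      simp only [Finset.coe_Icc, Set.mem_Icc] at hx ⊢; lia)
  refine (E.integral_mul_log_sub_log_le ν hn
    (fun ω => mul_nonneg (emptyAt_nonneg _ ω) E.hp0.le) hweight
    (fun ω => E.regDensity_pos ν n _) hshift).trans ?_
  refine mul_le_mul_of_nonneg_left ?_ (inv_nonneg.2 E.minProb_pos.le)
  calc ∫ ω, emptyAt 1 ω * E.p * E.regDensity ν n (shift 1 ω) ∂E.μ
      ≤ ∫ ω, E.regDensity ν n (shift 1 ω) ∂E.μ :=
        integral_mono (integrable_of_continuous (by fun_prop) _)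
          (integrable_of_continuous (by fun_prop) _) fun ω =>
            mul_le_of_le_one_left (E.regDensity_pos ν n _).le
              (mul_le_one₀ (emptyAt_le_one 1 ω) E.hp0.le E.hp1.le)
    _ = 2 := by rw [E.integral_comp_shift 1 (by fun_prop), E.integral_regDensity]

lemma integral_shift_neg_one_log_le (hn : 0 ≤ n) (h₀ : ∀ᵐ ω ∂ν, ω 0 = false) :
    ∫ ω, (1 - E.p) *
      (Real.log (E.regDensity ν n (shift (-1) ω)) - Real.log (E.regDensity ν n ω)) ∂ν ≤
        E.minProb⁻¹ * 2 := by
  -- The shifted configuration has its old front at `1`; recording it there makes the density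
  -- local to `[1, n + 1]`.
  set F := E.regDensity ν n
  have hF : Continuous F := E.continuous_regDensity ν n
  set G : Config → ℝ := fun ω => F (Function.update ω 1 false)
  have hG : Continuous G := hF.comp (continuous_id.update 1 continuous_const)
  have hlocal : DependsOnF (fun ω => G (shift (-1) ω)) ↑(Finset.Icc 1 (n + 1)) := fun ω ω' h =>
    E.dependsOnF_regDensity ν n _ _ fun x hx => by
      by_cases hx₁ : x = 1
      · simp [hx₁]
      · simp only [Function.update_of_ne hx₁, shift]
        exact h _ (by simp only [Finset.coe_Icc, Set.mem_Icc] at hx ⊢; lia)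
  have hae : ∫ ω, (1 - E.p) * (Real.log (F (shift (-1) ω)) - Real.log (F ω)) ∂ν =
      ∫ ω, (1 - E.p) * (Real.log (G (shift (-1) ω)) - Real.log (F ω)) ∂ν := by
    refine integral_congr_ae (h₀.mono fun ω hω => ?_)
    have hone : shift (-1) ω 1 = false := by simpa [shift] using hω
    simp only [G, ← hone, Function.update_eq_self]
  rw [hae]
  refine (E.integral_mul_log_sub_log_le ν hn (fun _ => sub_nonneg.2 E.hp1.le) (fun _ _ _ => rfl)
    (fun ω => E.regDensity_pos ν n _) hlocal).trans ?_
  refine mul_le_mul_of_nonneg_left ?_ (inv_nonneg.2 E.minProb_pos.le)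
  rw [integral_const_mul, E.integral_comp_shift (-1) hG, ← integral_const_mul,
    ← E.integral_regDensity ν n, ← E.integral_update 1 (E.continuous_regDensity ν n)]
  have hupdate (b : Bool) : Continuous fun ω => F (Function.update ω 1 b) :=
    hF.comp (continuous_id.update 1 continuous_const)
  exact integral_mono (integrable_of_continuous (hG.const_mul _) _)
    (integrable_of_continuous (((hupdate _).const_mul _).add ((hupdate _).const_mul _)) _)
    fun ω => le_add_of_nonneg_left (mul_pos E.hp0 (E.regDensity_pos ν n _)).le

end Probability

lemma rootDensity_sub_sq_le [IsFiniteMeasure ν] (hn : 0 ≤ n) (ω η : Config) :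
    (E.rootDensity ν n ω - E.rootDensity ν n η) ^ 2 ≤ ∑ b, E.siteProb b *
      (E.rootDensity ν (n + 1) (Function.update ω (n + 1) b) -
        E.rootDensity ν (n + 1) (Function.update η (n + 1) b)) ^ 2 := by
  have havg (ω : Config) : E.regDensity ν n ω = ∑ b, E.siteProb b *
      E.regDensity ν (n + 1) (Function.update ω (n + 1) b) := by
    simp only [regDensity, windowDensity]
    rw [← Finset.insert_Icc_right_eq_Icc_add_one (by lia),
      E.localDensity_eq_add ν (x := n + 1) (by simp)]
    simp [mul_add, siteProb]
    ring
  have hnonneg (ω : Config) (b : Bool) :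
      0 ≤ E.siteProb b * E.regDensity ν (n + 1) (Function.update ω (n + 1) b) :=
    mul_nonneg (E.siteProb_pos b).le (E.regDensity_pos ν _ _).le
  rw [rootDensity, rootDensity, havg ω, havg η]
  refine (sq_sqrt_sum_sub_sqrt_sum_le _ (hnonneg ω) (hnonneg η)).trans_eq
    (Finset.sum_congr rfl fun b _ => ?_)
  have hb := (E.siteProb_pos b).le
  rw [Real.sqrt_mul hb, Real.sqrt_mul hb, ← mul_sub, mul_pow, Real.sq_sqrt hb]
  rfl

lemma energy_le_energy_succ [IsFiniteMeasure ν] (hx : 1 ≤ x) (hxn : x < n) :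
    E.energy ν n x ≤ E.energy ν (n + 1) x := by
  have hflip (ω : Config) (b : Bool) :
      flipAt (Function.update ω (n + 1) b) x = Function.update (flipAt ω x) (n + 1) b := by
    funext y
    simp only [flipAt, Function.update_apply]
    grind
  have hc := E.continuous_energy_integrand ν (n + 1) x
  have hupdate (b : Bool) := hc.comp (continuous_id.update (n + 1) (continuous_const (y := b)))
  rw [energy, energy, ← E.integral_update (n + 1) hc]
  refine integral_mono (integrable_of_continuous (E.continuous_energy_integrand ν n x) _)
    (integrable_of_continuous (((hupdate _).const_mul _).add ((hupdate _).const_mul _)) _)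
    fun ω => ?_
  have hroot := mul_le_mul_of_nonneg_left
    (E.rootDensity_sub_sq_le ν (by lia : 0 ≤ n) (flipAt ω x) ω)
    (mul_nonneg (emptyAt_nonneg (x + 1) ω) (E.flipRate_nonneg x ω))
  simp only [sqGrad, emptyAt, flipRate, hflip, Function.update_of_ne (by lia : x ≠ n + 1),
    Function.update_of_ne (by lia : x + 1 ≠ n + 1), Fintype.sum_bool, siteProb] at hroot ⊢
  simp only [if_true, Bool.false_eq_true, if_false] at hroot
  linarith

lemma energy_mono [IsFiniteMeasure ν] {m : ℤ} (hx : 1 ≤ x) (hxn : x < n) (hnm : n ≤ m) :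
    E.energy ν n x ≤ E.energy ν m x := by
  induction m, hnm using Int.leInduction with
  | base => exact le_rfl
  | succ m hm ih => exact ih.trans (E.energy_le_energy_succ ν hx (by lia))

namespace IsFrontInvariant

variable {E ν}

/-- In the stationary state the entropy does not change: the production in the bulk compensates
the contributions of the front moving by `±1` and of the last site. -/
theorem sum_energy_le (I : E.IsFrontInvariant ν) (hn : 1 ≤ n) :
    ∑ x ∈ Finset.Icc 1 (n - 1), E.energy ν n x ≤ 6 * E.minProb⁻¹ := by
  have := I.isProbabilityMeasure
  have hentropy := I.integral_generator_eq_zero (u := fun ω => Real.log (E.regDensity ν n ω))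
    (by lia) fun ω ω' h => congrArg Real.log (E.dependsOnF_regDensity ν n ω ω' h)
  rw [← Finset.insert_Icc_sub_one_right_eq_Icc hn, Finset.sum_insert (by simp)] at hentropy
  have hbulk := Finset.sum_le_sum fun x hx => E.integral_bulk_flip_log_le ν (n := n) (x := x) hx
  rw [Finset.sum_neg_distrib] at hbulk
  linarith [E.integral_last_flip_log_le ν hn, E.integral_shift_one_log_le ν (n := n) (by lia),
    E.integral_shift_neg_one_log_le ν (n := n) (by lia)
      (I.ae_mem_LO₀.mono fun ω hω => (mem_LO₀_iff.1 hω).1)]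

lemma exists_sum_energy_tail_le (I : E.IsFrontInvariant ν) {ε : ℝ} (hε : 0 < ε) :
    ∃ L : ℤ, 1 ≤ L ∧ ∀ n : ℤ, ∑ x ∈ Finset.Icc L (n - 1), E.energy ν n x ≤ ε := by
  have := I.isProbabilityMeasure
  set T : ℕ → ℝ := fun k => ∑ x ∈ Finset.Icc 1 (k : ℤ), E.energy ν (k + 1) x
  have hbdd : BddAbove (Set.range T) := by
    refine ⟨6 * E.minProb⁻¹, Set.forall_mem_range.2 fun k => ?_⟩
    simpa using I.sum_energy_le (n := k + 1) (by lia)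
  obtain ⟨l, hl⟩ := exists_lt_of_lt_ciSup (sub_lt_self (⨆ k, T k) hε)
  refine ⟨l + 1, by lia, fun n => ?_⟩
  rcases lt_or_ge n (l + 2) with hn | hn
  · rw [Finset.Icc_eq_empty (by lia), Finset.sum_empty]
    exact hε.le
  obtain ⟨m, rfl⟩ : ∃ m : ℕ, n = m + 1 := ⟨(n - 1).toNat, by lia⟩
  rw [add_sub_cancel_right]
  have hsplit : ∑ x ∈ Finset.Icc (l + 1 : ℤ) m, E.energy ν (m + 1) x +
      ∑ x ∈ Finset.Icc 1 (l : ℤ), E.energy ν (m + 1) x = T m := by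
    have hsdiff : Finset.Icc 1 (m : ℤ) \ Finset.Icc 1 (l : ℤ) = Finset.Icc (l + 1 : ℤ) m := by
      ext x
      simp only [Finset.mem_sdiff, Finset.mem_Icc]
      lia
    rw [← hsdiff, Finset.sum_sdiff (Finset.Icc_subset_Icc_right (by lia))]
  have hmono : T l ≤ ∑ x ∈ Finset.Icc 1 (l : ℤ), E.energy ν (m + 1) x :=
    Finset.sum_le_sum fun x hx => by
      rw [Finset.mem_Icc] at hx
      exact E.energy_mono ν hx.1 (by lia) (by lia)
  linarith [le_ciSup hbdd m]

end IsFrontInvariant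

end EastProcess

/-! ### Window averages and the local Poincaré inequality -/

namespace EastProcess

variable (E : EastProcess) {f g e b F : Config → ℝ} {U W : Finset ℤ}

/-- The average of `f` over the equilibrium configurations in the window `W`: the conditional
expectation of `f` given the configuration outside `W`, in the version defined everywhere. -/
def windowAverage (W : Finset ℤ) (f : Config → ℝ) (ω : Config) : ℝ :=
  ∫ ζ, f (W.piecewise ζ ω) ∂E.μ

lemma dependsOnF_windowAverage (W : Finset ℤ) {T : Set ℤ} (h : DependsOnF f T) :
    DependsOnF (E.windowAverage W f) (T \ ↑W) := fun ω ω' hω => by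
  refine integral_congr_ae (ae_of_all _ fun ζ => h _ _ fun x hx => ?_)
  by_cases hxW : x ∈ W
  · simp [hxW]
  · simp [hxW, hω x ⟨hx, hxW⟩]

@[fun_prop]
lemma continuous_windowAverage (W : Finset ℤ) (hf : Continuous f) :
    Continuous (E.windowAverage W f) := by
  have h := continuous_parametric_integral_of_continuous (μ := E.μ)
    (f := fun ω ζ => f (W.piecewise ζ ω)) (by fun_prop) isCompact_univ
  simp only [Measure.restrict_univ] at h
  exact h

lemma windowAverage_nonneg (W : Finset ℤ) (hf : ∀ ω, 0 ≤ f ω) (ω : Config) :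
    0 ≤ E.windowAverage W f ω :=
  integral_nonneg fun _ => hf _

lemma sq_windowAverage_le (W : Finset ℤ) (hf : Continuous f) (ω : Config) :
    E.windowAverage W f ω ^ 2 ≤ E.windowAverage W (fun η => f η ^ 2) ω :=
  even_two.convexOn_pow.map_integral_le (continuous_pow 2).continuousOn isClosed_univ
    (ae_of_all _ fun _ => Set.mem_univ _) (integrable_of_continuous (by fun_prop) _)
    (integrable_of_continuous (by fun_prop) _)

lemma integral_mul_windowAverage (he : Continuous e) (heW : DependsOnF e (↑W)ᶜ)
    (hf : Continuous f) :
    ∫ ω, e ω * E.windowAverage W f ω ∂E.μ = ∫ ω, e ω * f ω ∂E.μ := by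
  rw [← E.integral_piecewise W (f := fun ω => e ω * f ω) (by fun_prop)]
  refine integral_congr_ae (ae_of_all _ fun ω => ?_)
  simp only [heW.piecewise_eq disjoint_compl_left, windowAverage]
  rw [integral_const_mul]

lemma integral_mul_eq_mul_integral (hb : DependsOnF b ↑W) (hg : Continuous g)
    (hgW : DependsOnF g (↑W)ᶜ) :
    ∫ ω, b ω * g ω ∂E.μ = (∫ ω, b ω ∂E.μ) * ∫ ω, g ω ∂E.μ := by
  have hbW (ζ ω : Config) : b (W.piecewise ζ ω) = b ζ :=
    hb _ _ fun x hx => W.piecewise_eq_of_mem _ _ hx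
  have hbc : Continuous b := IsCylinder.continuous ⟨W, hb⟩
  rw [← E.integral_piecewise W (f := fun ω => b ω * g ω) (by fun_prop), ← integral_const_mul]
  refine integral_congr_ae (ae_of_all _ fun ω => ?_)
  simp only [hgW.piecewise_eq disjoint_compl_left, hbW]
  rw [integral_mul_const]

lemma minProb_pow_mul_le_windowAverage (W : Finset ℤ) (hf : Continuous f) (hf₀ : ∀ ω, 0 ≤ f ω)
    (ω : Config) : E.minProb ^ W.card * f ω ≤ E.windowAverage W f ω := by
  have hpow : E.minProb ^ W.card ≤ E.μ.real (cylinderAt W ω) := by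
    rw [real_cylinderAt, ← Finset.prod_const]
    exact Finset.prod_le_prod (fun _ _ => E.minProb_pos.le) fun x _ => E.minProb_le (ω x)
  have hpw {ζ : Config} (hζ : ζ ∈ cylinderAt W ω) : W.piecewise ζ ω = ω :=
    (W.piecewise_congr (fun x hx => hζ x hx) fun _ _ => rfl).trans (W.piecewise_same ω)
  calc E.minProb ^ W.card * f ω ≤ E.μ.real (cylinderAt W ω) * f ω := by
        gcongr
        exact hf₀ ω
    _ = ∫ ζ in cylinderAt W ω, f (W.piecewise ζ ω) ∂E.μ := by
        rw [setIntegral_congr_fun (g := fun _ => f ω) (measurableSet_cylinderAt W ω)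
          fun ζ hζ => congrArg f (hpw hζ), setIntegral_const, smul_eq_mul]
    _ ≤ E.windowAverage W f ω :=
        setIntegral_le_integral (integrable_of_continuous (by fun_prop) _)
          (ae_of_all _ fun _ => hf₀ _)

/-- Resampling `U` as well makes the average independent of `b`, at the price of one factor
`E.minProb` per site of `U`. -/
lemma minProb_pow_mul_integral_le (hb : DependsOnF b ↑(W ∪ U)) (hb₀ : ∀ ω, 0 ≤ b ω)
    (he : Continuous e) (heWU : DependsOnF e (↑(W ∪ U))ᶜ) (he₀ : ∀ ω, 0 ≤ e ω)
    (hF : Continuous F) (hF₀ : ∀ ω, 0 ≤ F ω) :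
    E.minProb ^ U.card * ∫ ω, e ω * b ω * E.windowAverage W F ω ∂E.μ ≤
      (∫ ω, b ω ∂E.μ) * ∫ ω, e ω * F ω ∂E.μ := by
  set A := E.windowAverage W F
  have hA : Continuous A := E.continuous_windowAverage W hF
  have hbc : Continuous b := IsCylinder.continuous ⟨_, hb⟩
  have heU : DependsOnF e (↑U)ᶜ := heWU.mono (by simp)
  have heW : DependsOnF e (↑W)ᶜ := heWU.mono (by simp)
  have hAU : DependsOnF (E.windowAverage U A) (↑(W ∪ U))ᶜ := by
    rw [Finset.coe_union, Set.compl_eq_univ_sdiff, ← Set.sdiff_sdiff]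
    exact E.dependsOnF_windowAverage U (E.dependsOnF_windowAverage W
      fun ω ω' h => by rw [funext fun x => h x trivial])
  calc E.minProb ^ U.card * ∫ ω, e ω * b ω * A ω ∂E.μ
      = ∫ ω, e ω * b ω * (E.minProb ^ U.card * A ω) ∂E.μ := by
        rw [← integral_const_mul]
        congr with ω
        ring
    _ ≤ ∫ ω, e ω * b ω * E.windowAverage U A ω ∂E.μ :=
        integral_mono (integrable_of_continuous (by fun_prop) _)
          (integrable_of_continuous (by fun_prop) _) fun ω => mul_le_mul_of_nonneg_left
            (E.minProb_pow_mul_le_windowAverage U hA (E.windowAverage_nonneg W hF₀) ω)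
            (mul_nonneg (he₀ ω) (hb₀ ω))
    _ = ∫ ω, b ω * (e ω * E.windowAverage U A ω) ∂E.μ := by
        congr with ω
        ring
    _ = (∫ ω, b ω ∂E.μ) * ∫ ω, e ω * E.windowAverage U A ω ∂E.μ :=
        E.integral_mul_eq_mul_integral hb (by fun_prop)
          fun ω ω' h => by rw [heWU ω ω' h, hAU ω ω' h]
    _ = (∫ ω, b ω ∂E.μ) * ∫ ω, e ω * F ω ∂E.μ := by
        rw [E.integral_mul_windowAverage he heU hA, E.integral_mul_windowAverage he heW hF]

/-- The empty site `m` releases the constraint at the right end of the window, so that the spectral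
gap inequality applies inside the window. -/
lemma gap_mul_windowAverage_le {L m : ℤ} (hf : Continuous f) {ω : Config} (hm : ω m = false) :
    gap E * E.windowAverage (Finset.Icc L (m - 1))
        (fun η => (f η - E.windowAverage (Finset.Icc L (m - 1)) f η) ^ 2) ω ≤
      1 / 2 * ∑ x ∈ Finset.Icc L (m - 1), E.windowAverage (Finset.Icc L (m - 1))
        (fun η => emptyAt (x + 1) η * sqGrad E.p f x η) ω := by
  set W := Finset.Icc L (m - 1) with hW
  set h : Config → ℝ := fun ζ => f (W.piecewise ζ ω)
  have hdep : DependsOnF h ↑W := fun ζ ζ' hζ =>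
    congrArg f (W.piecewise_congr (fun x hx => hζ x hx) fun _ _ => rfl)
  have hc : Continuous h := by fun_prop
  have hvar : E.windowAverage W (fun η => (f η - E.windowAverage W f η) ^ 2) ω =
      variance h E.μ := by
    rw [variance_eq_integral hc.measurable.aemeasurable]
    simp only [windowAverage, Finset.piecewise_idem_right, h]
  rw [hvar]
  refine (E.gap_mul_variance_le hdep).trans ?_
  gcongr with x hx
  refine integral_mono
    (integrable_of_continuous ((continuous_emptyAt _).mul (continuous_sqGrad _ hc x)) _)
    (integrable_of_continuous (((continuous_emptyAt _).mul (continuous_sqGrad _ hf x)).comp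
      (by fun_prop : Continuous fun ζ : Config => W.piecewise ζ ω)) _) fun ζ => ?_
  have hgrad : sqGrad E.p h x ζ = sqGrad E.p f x (W.piecewise ζ ω) := by
    simp only [sqGrad, flipRate, h, piecewise_flipAt hx, W.piecewise_eq_of_mem _ _ hx]
  have hempty : emptyAt (x + 1) ζ ≤ emptyAt (x + 1) (W.piecewise ζ ω) := by
    by_cases hx₁ : x + 1 ∈ W
    · simp [emptyAt, hx₁]
    · have hxm : x + 1 = m := by
        simp only [hW, Finset.mem_Icc] at hx hx₁
        lia
      rw [hxm] at hx₁ ⊢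
      simpa [emptyAt, hx₁, hm] using emptyAt_le_one m ζ
  rw [hgrad]
  exact mul_le_mul_of_nonneg_right hempty (E.sqGrad_nonneg f x _)

lemma gap_mul_integral_mul_sq_sub_le {L m : ℤ} (he : Continuous e)
    (heW : DependsOnF e (↑(Finset.Icc L (m - 1)))ᶜ) (he₀ : ∀ ω, 0 ≤ e ω)
    (hem : ∀ ω, ω m = true → e ω = 0) (hf : Continuous f) :
    gap E * ∫ ω, e ω * (f ω - E.windowAverage (Finset.Icc L (m - 1)) f ω) ^ 2 ∂E.μ ≤
      1 / 2 * ∑ x ∈ Finset.Icc L (m - 1),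
        ∫ ω, e ω * (emptyAt (x + 1) ω * sqGrad E.p f x ω) ∂E.μ := by
  set W := Finset.Icc L (m - 1)
  have hsq : Continuous fun ω => (f ω - E.windowAverage W f ω) ^ 2 := by fun_prop
  have hgrad (x : ℤ) : Continuous fun ω => emptyAt (x + 1) ω * sqGrad E.p f x ω :=
    (continuous_emptyAt _).mul (continuous_sqGrad _ hf x)
  have hcont (x : ℤ) : Continuous fun ω => e ω *
      E.windowAverage W (fun η => emptyAt (x + 1) η * sqGrad E.p f x η) ω :=
    he.mul (E.continuous_windowAverage W (hgrad x))
  rw [← E.integral_mul_windowAverage he heW hsq]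
  simp only [← fun x => E.integral_mul_windowAverage he heW (hgrad x)]
  rw [← integral_const_mul, ← integral_finsetSum _ fun x _ => integrable_of_continuous (hcont x) _,
    ← integral_const_mul]
  refine integral_mono (integrable_of_continuous (by fun_prop) _)
    (integrable_of_continuous (.const_mul (continuous_finsetSum _ fun x _ => hcont x) _) _)
    fun ω => ?_
  simp only
  rw [← Finset.mul_sum, mul_left_comm, mul_left_comm (1 / 2 : ℝ)]
  cases hm : ω m with
  | true => simp [hem ω hm]
  | false => exact mul_le_mul_of_nonneg_left (E.gap_mul_windowAverage_le hf hm) (he₀ ω)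

end EastProcess

/-! ### The last empty site of a window -/

namespace East

/-- The indicator that `m` is the last empty site of the windows ending at `n`. -/
def lastEmptyAt (n m : ℤ) (ω : Config) : ℝ :=
  emptyAt m ω * ∏ i ∈ Finset.Ioc m n, (1 - emptyAt i ω)

lemma lastEmptyAt_nonneg (n m : ℤ) (ω : Config) : 0 ≤ lastEmptyAt n m ω :=
  mul_nonneg (emptyAt_nonneg m ω)
    (Finset.prod_nonneg fun i _ => sub_nonneg.2 (emptyAt_le_one i ω))

lemma lastEmptyAt_eq_zero {n m : ℤ} {ω : Config} (h : ω m = true) : lastEmptyAt n m ω = 0 := by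
  simp [lastEmptyAt, emptyAt, h]

lemma dependsOnF_lastEmptyAt {n m : ℤ} (h : m ≤ n) :
    DependsOnF (lastEmptyAt n m) (Set.Icc m n) := fun ω ω' hω => by
  simp only [lastEmptyAt, emptyAt, hω m ⟨le_rfl, h⟩]
  congr 1
  exact Finset.prod_congr rfl fun i hi => by
    rw [hω i ⟨(Finset.mem_Ioc.1 hi).1.le, (Finset.mem_Ioc.1 hi).2⟩]

@[fun_prop]
lemma continuous_lastEmptyAt (n m : ℤ) : Continuous (lastEmptyAt n m) := by
  unfold lastEmptyAt; fun_prop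

lemma prod_one_sub_emptyAt (W : Finset ℤ) (ω : Config) :
    ∏ i ∈ W, (1 - emptyAt i ω) = (cylinderAt W fun _ => true).indicator 1 ω := by
  by_cases h : ω ∈ cylinderAt W fun _ => true
  · rw [Set.indicator_of_mem h, Pi.one_apply]
    exact Finset.prod_eq_one fun i hi => by simp [emptyAt, h i hi]
  · obtain ⟨i, hi, hω⟩ : ∃ i ∈ W, ω i = false := by simpa [cylinderAt] using h
    rw [Set.indicator_of_notMem h]
    exact Finset.prod_eq_zero hi (by simp [emptyAt, hω])

lemma sum_lastEmptyAt (M n : ℤ) (ω : Config) :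
    ∑ m ∈ Finset.Icc M n, lastEmptyAt n m ω =
      1 - (cylinderAt (Finset.Icc M n) fun _ => true).indicator 1 ω := by
  have h : ∏ i ∈ Finset.Icc M n, (1 - emptyAt i ω) = 1 - ∑ m ∈ Finset.Icc M n,
      emptyAt m ω * ∏ i ∈ Finset.Icc M n with m < i, (1 - emptyAt i ω) :=
    Finset.prod_one_sub_ordered (ι := ℤᵒᵈ) _ _
  rw [← prod_one_sub_emptyAt, h, sub_sub_cancel]
  refine Finset.sum_congr rfl fun m hm => ?_
  have hIoc : Finset.Ioc m n = Finset.filter (m < ·) (Finset.Icc M n) := by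
    ext i
    simp only [Finset.mem_filter, Finset.mem_Icc, Finset.mem_Ioc] at hm ⊢
    lia
  rw [lastEmptyAt, hIoc]

lemma sum_lastEmptyAt_le_one (M n : ℤ) (ω : Config) :
    ∑ m ∈ Finset.Icc M n, lastEmptyAt n m ω ≤ 1 := by
  rw [sum_lastEmptyAt]
  exact sub_le_self _ (Set.indicator_nonneg (fun _ _ => zero_le_one) _)

lemma sum_integral_lastEmptyAt_mul_le (m : Measure Config) [IsFiniteMeasure m] {g : Config → ℝ}
    (hg : Continuous g) (hg₀ : ∀ ω, 0 ≤ g ω) (M n : ℤ) :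
    ∑ k ∈ Finset.Icc M n, ∫ ω, lastEmptyAt n k ω * g ω ∂m ≤ ∫ ω, g ω ∂m := by
  rw [← integral_finsetSum _ fun k _ => integrable_of_continuous (by fun_prop) _]
  refine integral_mono (integrable_of_continuous (by fun_prop) _)
    (integrable_of_continuous hg _) fun ω => ?_
  simp only [← Finset.sum_mul]
  exact mul_le_of_le_one_left (hg₀ ω) (sum_lastEmptyAt_le_one M n ω)

lemma integral_le_real_occupied_add (m : Measure Config) [IsFiniteMeasure m] {b : Config → ℝ}
    (hb : Continuous b) (hb₁ : ∀ ω, b ω ≤ 1) (M n : ℤ) :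
    ∫ ω, b ω ∂m ≤ m.real (cylinderAt (Finset.Icc M n) fun _ => true) +
      ∑ k ∈ Finset.Icc M n, ∫ ω, lastEmptyAt n k ω * b ω ∂m := by
  have hcyl := measurableSet_cylinderAt (Finset.Icc M n) fun _ => true
  have hind : Integrable ((cylinderAt (Finset.Icc M n) fun _ => true).indicator
      (1 : Config → ℝ)) m := (integrable_const (1 : ℝ)).indicator hcyl
  have hsum : Integrable (fun ω => ∑ k ∈ Finset.Icc M n, lastEmptyAt n k ω * b ω) m :=
    integrable_of_continuous (by fun_prop) _
  rw [← integral_finsetSum _ fun k _ => integrable_of_continuous (by fun_prop) _,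
    ← integral_indicator_one hcyl, ← integral_add hind hsum]
  refine integral_mono (integrable_of_continuous hb _) (hind.add hsum) fun ω => ?_
  simp only [← Finset.sum_mul, sum_lastEmptyAt]
  by_cases hω : ω ∈ cylinderAt (Finset.Icc M n) fun _ => true <;> simp [hω, hb₁ ω]

end East

/-! ### Uniform absolute continuity on local functions -/

namespace EastProcess

variable (E : EastProcess)

lemma gap_mul_sum_integral_lastEmptyAt_le {f : Config → ℝ} (hf : Continuous f) (L M n : ℤ) :
    gap E * ∑ m ∈ Finset.Icc M n, ∫ ω, lastEmptyAt n m ω *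
        (f ω - E.windowAverage (Finset.Icc L (m - 1)) f ω) ^ 2 ∂E.μ ≤
      1 / 2 * ∑ x ∈ Finset.Icc L (n - 1), ∫ ω, emptyAt (x + 1) ω * sqGrad E.p f x ω ∂E.μ := by
  have hgrad (x : ℤ) : Continuous fun ω => emptyAt (x + 1) ω * sqGrad E.p f x ω :=
    (continuous_emptyAt _).mul (continuous_sqGrad _ hf x)
  have hgrad₀ (x : ℤ) (ω : Config) : 0 ≤ emptyAt (x + 1) ω * sqGrad E.p f x ω :=
    mul_nonneg (emptyAt_nonneg _ ω) (E.sqGrad_nonneg f x ω)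
  have hsite : ∀ m ∈ Finset.Icc M n, gap E * ∫ ω, lastEmptyAt n m ω *
        (f ω - E.windowAverage (Finset.Icc L (m - 1)) f ω) ^ 2 ∂E.μ ≤
      1 / 2 * ∑ x ∈ Finset.Icc L (n - 1),
        ∫ ω, lastEmptyAt n m ω * (emptyAt (x + 1) ω * sqGrad E.p f x ω) ∂E.μ := fun m hm => by
    have hmn := (Finset.mem_Icc.1 hm).2
    have hdep : DependsOnF (lastEmptyAt n m) (↑(Finset.Icc L (m - 1)))ᶜ :=
      (dependsOnF_lastEmptyAt hmn).mono fun x hx => by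
        simp only [Set.mem_Icc, Set.mem_compl_iff, Finset.coe_Icc] at hx ⊢
        lia
    refine (E.gap_mul_integral_mul_sq_sub_le (continuous_lastEmptyAt n m) hdep
      (lastEmptyAt_nonneg n m) (fun ω => lastEmptyAt_eq_zero) hf).trans ?_
    refine mul_le_mul_of_nonneg_left ?_ one_half_pos.le
    exact Finset.sum_le_sum_of_subset_of_nonneg (Finset.Icc_subset_Icc_right (by lia))
      fun x _ _ => integral_nonneg fun ω => mul_nonneg (lastEmptyAt_nonneg n m ω) (hgrad₀ x ω)
  rw [Finset.mul_sum]
  refine (Finset.sum_le_sum hsite).trans ?_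
  rw [← Finset.mul_sum, Finset.sum_comm]
  gcongr with x
  exact sum_integral_lastEmptyAt_mul_le E.μ (hgrad x) (hgrad₀ x) M n

lemma windowDensity_mul_le (ν : Measure Config) (n : ℤ) (W : Finset ℤ) {e b : ℝ} (he₀ : 0 ≤ e)
    (hb₀ : 0 ≤ b) (hb₁ : b ≤ 1) (ω : Config) :
    E.windowDensity ν n ω * (e * b) ≤
      2 * (e * (E.rootDensity ν n ω - E.windowAverage W (E.rootDensity ν n) ω) ^ 2) +
        2 * (e * b * E.windowAverage W (E.regDensity ν n) ω) := by
  set r := E.rootDensity ν n ω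
  set a := E.windowAverage W (E.rootDensity ν n) ω
  have hsq (η : Config) : E.rootDensity ν n η ^ 2 = E.regDensity ν n η :=
    Real.sq_sqrt (E.regDensity_pos ν n η).le
  have hjensen : a ^ 2 ≤ E.windowAverage W (E.regDensity ν n) ω :=
    (E.sq_windowAverage_le W (E.continuous_rootDensity ν n) ω).trans_eq (by simp only [hsq])
  have hdensity : E.windowDensity ν n ω ≤ r ^ 2 :=
    (le_add_of_nonneg_right zero_le_one).trans_eq (hsq ω).symm
  calc E.windowDensity ν n ω * (e * b) ≤ r ^ 2 * (e * b) := by gcongr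
    _ ≤ 2 * ((r - a) ^ 2 + a ^ 2) * (e * b) := by
        gcongr
        simpa using add_sq_le (a := r - a) (b := a)
    _ = 2 * (e * (r - a) ^ 2 * b) + 2 * (e * b * a ^ 2) := by ring
    _ ≤ 2 * (e * (r - a) ^ 2) + 2 * (e * b * E.windowAverage W (E.regDensity ν n) ω) := by
        have hdrop : e * (r - a) ^ 2 * b ≤ e * (r - a) ^ 2 :=
          mul_le_of_le_one_right (by positivity) hb₁
        linarith [mul_le_mul_of_nonneg_left hjensen (mul_nonneg he₀ hb₀)]

section WindowBound

variable (ν : Measure Config) {b : Config → ℝ} {L M n : ℤ}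

lemma integral_lastEmptyAt_mul_windowAverage_le {F : Config → ℝ} {m : ℤ} (hL : 1 ≤ L)
    (hLM : L ≤ M) (hm : m ∈ Finset.Icc M n) (hb : DependsOnF b ↑(Finset.Icc 1 (M - 1)))
    (hb₀ : ∀ ω, 0 ≤ b ω) (hF : Continuous F) (hF₀ : ∀ ω, 0 ≤ F ω) :
    ∫ ω, lastEmptyAt n m ω * b ω * E.windowAverage (Finset.Icc L (m - 1)) F ω ∂E.μ ≤
      (E.minProb ^ (Finset.Icc 1 (L - 1)).card)⁻¹ *
        ((∫ ω, b ω ∂E.μ) * ∫ ω, lastEmptyAt n m ω * F ω ∂E.μ) := by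
  rw [Finset.mem_Icc] at hm
  have hunion : Finset.Icc L (m - 1) ∪ Finset.Icc 1 (L - 1) = Finset.Icc 1 (m - 1) := by
    ext x
    simp only [Finset.mem_union, Finset.mem_Icc]
    lia
  rw [le_inv_mul_iff₀ (pow_pos E.minProb_pos _)]
  refine E.minProb_pow_mul_integral_le ?_ hb₀ (continuous_lastEmptyAt n m) ?_
    (lastEmptyAt_nonneg n m) hF hF₀
  · rw [hunion]
    exact hb.mono (Finset.coe_subset.2 (Finset.Icc_subset_Icc_right (by lia)))
  · rw [hunion]
    refine (dependsOnF_lastEmptyAt hm.2).mono fun x hx => ?_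
    rw [Set.mem_Icc] at hx
    rw [Set.mem_compl_iff, Finset.coe_Icc, Set.mem_Icc]
    lia

lemma integral_lastEmptyAt_mul_le [IsFiniteMeasure ν] {m : ℤ} (hL : 1 ≤ L) (hLM : L ≤ M)
    (hm : m ∈ Finset.Icc M n) (hb : DependsOnF b ↑(Finset.Icc 1 (M - 1))) (hb₀ : ∀ ω, 0 ≤ b ω)
    (hb₁ : ∀ ω, b ω ≤ 1) :
    ∫ ω, lastEmptyAt n m ω * b ω ∂ν ≤
      2 * ∫ ω, lastEmptyAt n m ω * (E.rootDensity ν n ω -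
          E.windowAverage (Finset.Icc L (m - 1)) (E.rootDensity ν n) ω) ^ 2 ∂E.μ +
        2 * ((E.minProb ^ (Finset.Icc 1 (L - 1)).card)⁻¹ *
          ((∫ ω, b ω ∂E.μ) * ∫ ω, lastEmptyAt n m ω * E.regDensity ν n ω ∂E.μ)) := by
  obtain ⟨hMm, hmn⟩ := Finset.mem_Icc.1 hm
  set W := Finset.Icc L (m - 1)
  have hbc : Continuous b := IsCylinder.continuous ⟨_, hb⟩
  have hlast : DependsOnF (lastEmptyAt n m) ↑(Finset.Icc 1 n) :=
    (dependsOnF_lastEmptyAt hmn).mono (by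
      rw [Finset.coe_Icc]
      exact Set.Icc_subset_Icc_left (by lia))
  have hb' : DependsOnF b ↑(Finset.Icc 1 n) :=
    hb.mono (Finset.coe_subset.2 (Finset.Icc_subset_Icc_right (by lia)))
  rw [← E.integral_windowDensity_mul ν fun ω ω' h => by rw [hlast ω ω' h, hb' ω ω' h]]
  calc ∫ ω, E.windowDensity ν n ω * (lastEmptyAt n m ω * b ω) ∂E.μ
      ≤ ∫ ω, (2 * (lastEmptyAt n m ω * (E.rootDensity ν n ω -
            E.windowAverage W (E.rootDensity ν n) ω) ^ 2) +
          2 * (lastEmptyAt n m ω * b ω * E.windowAverage W (E.regDensity ν n) ω)) ∂E.μ :=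
        integral_mono (integrable_of_continuous (by fun_prop) _)
          (integrable_of_continuous (by fun_prop) _) fun ω =>
            E.windowDensity_mul_le ν n W (lastEmptyAt_nonneg n m ω) (hb₀ ω) (hb₁ ω) ω
    _ = 2 * ∫ ω, lastEmptyAt n m ω * (E.rootDensity ν n ω -
            E.windowAverage W (E.rootDensity ν n) ω) ^ 2 ∂E.μ +
          2 * ∫ ω, lastEmptyAt n m ω * b ω * E.windowAverage W (E.regDensity ν n) ω ∂E.μ := by
        rw [integral_add (integrable_of_continuous (by fun_prop) _)
          (integrable_of_continuous (by fun_prop) _), integral_const_mul, integral_const_mul]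
    _ ≤ _ := by
        gcongr
        exact E.integral_lastEmptyAt_mul_windowAverage_le hL hLM hm hb hb₀
          (E.continuous_regDensity ν n) fun ω => (E.regDensity_pos ν n ω).le

lemma integral_le_add_energy_add [IsProbabilityMeasure ν] (hgap : 0 < gap E) (hL : 1 ≤ L)
    (hLM : L ≤ M) (hb : DependsOnF b ↑(Finset.Icc 1 (M - 1))) (hb₀ : ∀ ω, 0 ≤ b ω)
    (hb₁ : ∀ ω, b ω ≤ 1) :
    ∫ ω, b ω ∂ν ≤ ν.real (cylinderAt (Finset.Icc M n) fun _ => true) +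
      (∑ x ∈ Finset.Icc L (n - 1), E.energy ν n x) / gap E +
        4 * (E.minProb ^ (Finset.Icc 1 (L - 1)).card)⁻¹ * ∫ ω, b ω ∂E.μ := by
  set c := (E.minProb ^ (Finset.Icc 1 (L - 1)).card)⁻¹
  have hc : 0 ≤ c := inv_nonneg.2 (pow_pos E.minProb_pos _).le
  have hcover := integral_le_real_occupied_add ν (IsCylinder.continuous ⟨_, hb⟩) hb₁ M n
  have hsum := Finset.sum_le_sum fun m (hm : m ∈ Finset.Icc M n) =>
    E.integral_lastEmptyAt_mul_le ν hL hLM hm hb hb₀ hb₁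
  simp only [Finset.sum_add_distrib, ← Finset.mul_sum] at hsum
  have hmass := sum_integral_lastEmptyAt_mul_le E.μ (E.continuous_regDensity ν n)
    (fun ω => (E.regDensity_pos ν n ω).le) M n
  rw [E.integral_regDensity ν n] at hmass
  have hmass' := mul_le_mul_of_nonneg_left hmass
    (mul_nonneg hc (integral_nonneg (μ := E.μ) hb₀))
  have hpoincare := E.gap_mul_sum_integral_lastEmptyAt_le (E.continuous_rootDensity ν n) L M n
  rw [← le_div_iff₀' hgap, mul_div_assoc] at hpoincare
  simp only [energy]
  linarith

end WindowBound

namespace IsFrontInvariant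

variable {E} {ν : Measure Config}

lemma exists_integral_le_add_mul (hgap : 0 < gap E) (I : E.IsFrontInvariant ν) {ε : ℝ}
    (hε : 0 < ε) : ∃ C : ℝ, 0 ≤ C ∧ ∀ (K : ℤ) (b : Config → ℝ),
      DependsOnF b ↑(Finset.Icc 1 K) → (∀ ω, 0 ≤ b ω) → (∀ ω, b ω ≤ 1) →
        ∫ ω, b ω ∂ν ≤ ε + C * ∫ ω, b ω ∂E.μ := by
  have := I.isProbabilityMeasure
  obtain ⟨L, hL, htail⟩ := I.exists_sum_energy_tail_le (mul_pos hε hgap)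
  refine ⟨4 * (E.minProb ^ (Finset.Icc 1 (L - 1)).card)⁻¹,
    mul_nonneg zero_le_four (inv_nonneg.2 (pow_pos E.minProb_pos _).le), fun K b hb hb₀ hb₁ => ?_⟩
  set M := max L (K + 1)
  have hb' : DependsOnF b ↑(Finset.Icc 1 (M - 1)) :=
    hb.mono (Finset.coe_subset.2 (Finset.Icc_subset_Icc_right (by lia)))
  have hlim := (I.tendsto_measureReal_occupied hgap M).add_const
    (ε + 4 * (E.minProb ^ (Finset.Icc 1 (L - 1)).card)⁻¹ * ∫ ω, b ω ∂E.μ)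
  rw [zero_add] at hlim
  refine ge_of_tendsto' hlim fun n => ?_
  rw [← add_assoc]
  refine (E.integral_le_add_energy_add ν hgap hL (le_max_left _ _) hb' hb₀ hb₁ (n := n)).trans ?_
  gcongr
  exact (div_le_iff₀ hgap).2 (htail n)

end IsFrontInvariant

end EastProcess

/-! ### From local functions to measurable sets -/

namespace East

lemma absolutelyContinuous_of_forall_mem_algebra {α : Type*} [mα : MeasurableSpace α]
    {𝒜 : Set (Set α)} (h𝒜 : IsSetAlgebra 𝒜) (hgen : mα = MeasurableSpace.generateFrom 𝒜)
    {m₁ m₂ : Measure α} [IsFiniteMeasure m₁] [IsFiniteMeasure m₂]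
    (h : ∀ ε > 0, ∃ C : ℝ, 0 ≤ C ∧ ∀ B ∈ 𝒜, m₁.real B ≤ ε + C * m₂.real B) : m₁ ≪ m₂ := by
  refine .mk fun A hA hA₀ => ?_
  rw [← measureReal_eq_zero_iff]
  refine (le_of_forall_pos_le_add fun ε hε => ?_).antisymm measureReal_nonneg
  obtain ⟨C, hC, hbound⟩ := h (ε / 2) (half_pos hε)
  have hδ : 0 < ε / (2 * (C + 1)) := by positivity
  obtain ⟨B, hB, hAB⟩ :=
    (Measure.MeasureDense.of_generateFrom_isSetAlgebra_finite (m₁ + m₂) h𝒜 hgen).approx A hA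
      (measure_ne_top _ _) _ hδ
  have happrox : (m₁ + m₂).real (symmDiff A B) < ε / (2 * (C + 1)) := by
    rw [Measure.real, ← ENNReal.toReal_ofReal hδ.le]
    exact ENNReal.toReal_strict_mono ENNReal.ofReal_ne_top hAB
  rw [measureReal_add_apply, lt_div_iff₀ (by positivity)] at happrox
  have h₁ : m₁.real A ≤ m₁.real B + m₁.real (symmDiff A B) :=
    add_comm (m₁.real B) _ ▸ (measureReal_mono (le_symmDiff_sup_right A B)).trans
      (measureReal_union_le _ _)
  have h₂ : m₂.real B ≤ m₂.real A + m₂.real (symmDiff A B) :=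
    add_comm (m₂.real A) _ ▸ (measureReal_mono (le_symmDiff_sup_left A B)).trans
      (measureReal_union_le _ _)
  have h₃ : m₂.real A = 0 := (measureReal_eq_zero_iff).2 hA₀
  rw [h₃, zero_add] at h₂
  linarith [hbound B hB, mul_le_mul_of_nonneg_left h₂ hC,
    mul_nonneg hC (measureReal_nonneg (μ := m₁) (s := symmDiff A B)),
    measureReal_nonneg (μ := m₂) (s := symmDiff A B)]

/-- The configuration `ω` with the half-line `(-∞, 0]` overwritten by a front at the origin. -/
def freezeFront (ω : Config) : Config :=
  fun x => if x < 0 then true else if x = 0 then false else ω x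

variable {x : ℤ} {S : Finset ℤ} {σ : Config}

lemma freezeFront_apply_of_pos (h : 0 < x) (ω : Config) : freezeFront ω x = ω x := by
  simp [freezeFront, h.not_gt, h.ne']

lemma freezeFront_apply_congr (h : x ≤ 0) (ω ω' : Config) :
    freezeFront ω x = freezeFront ω' x := by
  rcases h.lt_or_eq with hx | hx <;> simp [freezeFront, hx]

lemma freezeFront_eq_self {η : Config} (h : η ∈ LO₀) : freezeFront η = η := by
  obtain ⟨h₀, hneg⟩ := mem_LO₀_iff.1 h
  funext x
  rcases lt_trichotomy x 0 with hx | rfl | hx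
  · simp [freezeFront, hx, hneg x hx]
  · simp [freezeFront, h₀]
  · exact freezeFront_apply_of_pos hx η

lemma measurable_freezeFront : Measurable freezeFront :=
  measurable_pi_lambda _ fun x => by
    unfold freezeFront
    split_ifs <;> fun_prop

lemma preimage_freezeFront_cylinderAt (hσ : ∀ x ∈ S, freezeFront σ x = σ x) :
    freezeFront ⁻¹' cylinderAt S σ = cylinderAt (S.filter (0 < ·)) σ := by
  ext ω
  simp only [cylinderAt, Set.mem_preimage, Set.mem_ofPred_eq, Finset.mem_filter, and_imp]
  refine forall₂_congr fun x hx => ?_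
  rcases lt_or_ge 0 x with hx₀ | hx₀
  · simp [freezeFront_apply_of_pos hx₀, hx₀]
  · simp [freezeFront_apply_congr hx₀ ω σ, hσ x hx, hx₀.not_gt]

lemma preimage_freezeFront_cylinderAt_eq_empty (hx : x ∈ S) (hσ : freezeFront σ x ≠ σ x) :
    freezeFront ⁻¹' cylinderAt S σ = ∅ := by
  refine Set.eq_empty_of_forall_notMem fun ω hω => hσ ?_
  have hx₀ : x ≤ 0 := not_lt.1 fun h => hσ (freezeFront_apply_of_pos h σ)
  rw [freezeFront_apply_congr hx₀ σ ω, hω x hx]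

end East

namespace EastProcess

variable (E : EastProcess)

lemma map_freezeFront {μt : Measure Config} (hμt : IsMuTilde E.p μt) :
    E.μ.map freezeFront = μt := by
  have := hμt.1
  refine ext_of_cylinderAt fun S σ => ?_
  rw [Measure.map_apply measurable_freezeFront (measurableSet_cylinderAt S σ)]
  refine Eq.trans ?_ (hμt.2 S σ).symm
  by_cases hσ : ∀ x ∈ S, freezeFront σ x = σ x
  · rw [preimage_freezeFront_cylinderAt hσ]
    refine (E.μprod _ σ).trans ?_
    rw [Finset.prod_filter]
    refine Finset.prod_congr rfl fun x hx => ?_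
    have hx' := hσ x hx
    rcases lt_trichotomy x 0 with h | rfl | h
    · simp_all [freezeFront, h.not_gt]
    · simp_all [freezeFront]
    · simp [h, h.not_gt, h.ne']
  · push Not at hσ
    obtain ⟨x, hx, hσx⟩ := hσ
    rw [preimage_freezeFront_cylinderAt_eq_empty hx hσx, measure_empty]
    refine (Finset.prod_eq_zero hx ?_).symm
    rcases lt_trichotomy x 0 with h | rfl | h
    · simp_all [freezeFront]
    · simp_all [freezeFront]
    · exact absurd (freezeFront_apply_of_pos h σ) hσx

namespace IsFrontInvariant

variable {E} {ν : Measure Config}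

lemma map_freezeFront (I : E.IsFrontInvariant ν) : ν.map freezeFront = ν := by
  have hid : freezeFront =ᵐ[ν] id := I.ae_mem_LO₀.mono fun η hη => freezeFront_eq_self hη
  rw [Measure.map_congr hid, Measure.map_id]

lemma exists_measureReal_le_add_mul (hgap : 0 < gap E) (I : E.IsFrontInvariant ν)
    {μt : Measure Config} (hμt : IsMuTilde E.p μt) {ε : ℝ} (hε : 0 < ε) :
    ∃ C : ℝ, 0 ≤ C ∧ ∀ B ∈ measurableCylinders fun _ : ℤ => Bool,
      ν.real B ≤ ε + C * μt.real B := by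
  obtain ⟨C, hC, hbound⟩ := I.exists_integral_le_add_mul hgap hε
  refine ⟨C, hC, fun B hB => ?_⟩
  have hBm : MeasurableSet B := .of_mem_measurableCylinders hB
  have hm : MeasurableSet (freezeFront ⁻¹' B) := measurable_freezeFront hBm
  obtain ⟨S, T, -, rfl⟩ := (mem_measurableCylinders B).1 hB
  obtain ⟨K, hK⟩ := S.exists_le
  set A := freezeFront ⁻¹' cylinder S T
  have hdep : DependsOnF (A.indicator 1) ↑(Finset.Icc 1 K) := fun ω ω' hω => by
    have hrestrict : S.restrict (freezeFront ω) = S.restrict (freezeFront ω') := by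
      ext1 x
      rcases lt_or_ge 0 x.1 with hx | hx
      · simpa [freezeFront_apply_of_pos hx] using hω x (by simpa using ⟨hx, hK x x.2⟩)
      · exact freezeFront_apply_congr hx ω ω'
    exact Set.indicator_eq_indicator (iff_of_eq (congrArg (· ∈ T) hrestrict)) rfl
  have hA := hbound K (A.indicator 1) hdep (Set.indicator_nonneg fun _ _ => zero_le_one)
    (Set.indicator_le_self' fun _ _ => zero_le_one)
  rwa [integral_indicator_one hm, integral_indicator_one hm,
    ← map_measureReal_apply measurable_freezeFront hBm,
    ← map_measureReal_apply measurable_freezeFront hBm, I.map_freezeFront,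
    E.map_freezeFront hμt] at hA

end IsFrontInvariant

end EastProcess

theorem invariant_measure_absolutely_continuous_general {E : EastProcess} (hgap : 0 < gap E)
    {ν : Measure Config} (I : E.IsFrontInvariant ν) {μt : Measure Config}
    (hμt : IsMuTilde E.p μt) : ν ≪ μt := by
  have := I.isProbabilityMeasure
  have := hμt.1
  exact absolutelyContinuous_of_forall_mem_algebra isSetAlgebra_measurableCylinders
    generateFrom_measurableCylinders.symm fun ε hε => I.exists_measureReal_le_add_mul hgap hμt hε

/-- **Absolute continuity of the invariant measure w.r.t. `μ̃`**
(Proposition 5.3(2) of the paper): if `ν` is the invariant measure of the process seen from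
the front, then every measurable set `A` with `μ̃(A) = 0` satisfies `ν(A) = 0`. -/
theorem invariant_measure_absolutely_continuous (E : EastProcess) (hgap : 0 < gap E)
    (μt : Measure Config) (hμt : IsMuTilde E.p μt)
    (ν : Measure Config) (hν : IsProbabilityMeasure ν) (hν0 : ν LO₀ = 1)
    (hinv : ∀ t : ℝ, 0 ≤ t → Qt E t ν = ν)
    (huniq : ∀ ν' : Measure Config, IsProbabilityMeasure ν' → ν' LO₀ = 1 →
      (∀ t : ℝ, 0 ≤ t → Qt E t ν' = ν') → ν' = ν) :
    ∀ A : Set Config, MeasurableSet A → μt A = 0 → ν A = 0 := by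
  exact fun _ _ hA =>
    invariant_measure_absolutely_continuous_general hgap ⟨hν, hν0, hinv⟩ hμt hA

end
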